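/- arXiv:1506.07756 — 2 statements merged into one kernel-verified Lean document; each statement's English description precedes it below -/
import Mathlib

section
/- Let L be a QDS (Lindblad) generator on B(H) and let ρ be a full-rank density operator with L(ρ) = 0. Then ker(L) = ρ^{1/2}·ker(L†)·ρ^{1/2} = {ρ^{1/2} X ρ^{1/2} : X ∈ ker(L†)}. Moreover, there exists an orthogonal decomposition H = ⊕_ℓ (H_ℓ^{(A)} ⊗ H_ℓ^{(B)}) with respect to which ker(L†) = ⊕_ℓ B(H_ℓ^{(A)}) ⊗ I_ℓ^{(B)} and ρ = ⊕_ℓ p_ℓ · ρ_ℓ^{(A)} ⊗ τ_ℓ^{(B)}, where p_ℓ > 0 and ρ_ℓ^{(A)}, τ_ℓ^{(B)} are full-rank density operators on H_ℓ^{(A)} and H_ℓ^{(B)}, respectively. -/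
namespace QDS

open Matrix
open scoped ComplexOrder

/-! ### Basic single-system notions -/

section Single

variable {ι : Type*} [Fintype ι] [DecidableEq ι]

open Classical in
/-- The (unique) positive-semidefinite square root of a positive-semidefinite matrix
(junk value `0` if no positive-semidefinite square root exists). -/
noncomputable def msqrt (A : Matrix ι ι ℂ) : Matrix ι ι ℂ :=
  if h : ∃ B : Matrix ι ι ℂ, B.PosSemidef ∧ B * B = A then h.choose else 0

open Classical in
/-- The Moore–Penrose pseudoinverse of a matrix, defined via its characterizing
properties (it always exists and is unique for complex matrices). -/
noncomputable def mpinv (A : Matrix ι ι ℂ) : Matrix ι ι ℂ :=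
  if h : ∃ B : Matrix ι ι ℂ,
      A * B * A = A ∧ B * A * B = B ∧ (A * B)ᴴ = A * B ∧ (B * A)ᴴ = B * A
  then h.choose else 0

/-- A density operator: positive semidefinite with unit trace. -/
def IsDensity (ρ : Matrix ι ι ℂ) : Prop := ρ.PosSemidef ∧ ρ.trace = 1

/-- A CPTP map in Kraus (operator-sum) form. -/
def IsCPTP (T : Matrix ι ι ℂ →ₗ[ℂ] Matrix ι ι ℂ) : Prop :=
  ∃ (m : ℕ) (M : Fin m → Matrix ι ι ℂ),
    (∀ X, T X = ∑ k, M k * X * (M k)ᴴ) ∧ (∑ k, (M k)ᴴ * M k) = 1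

/-- The Lindblad (QDS) generator with Hamiltonian `Hm` and noise operators `Lk`:
`L(X) = -i[Hm, X] + Σₖ (Lₖ X Lₖ† - ½{Lₖ†Lₖ, X})`. -/
noncomputable def lindbladMap (Hm : Matrix ι ι ℂ) {m : ℕ} (Lk : Fin m → Matrix ι ι ℂ) :
    Matrix ι ι ℂ →ₗ[ℂ] Matrix ι ι ℂ :=
  (-Complex.I) • (LinearMap.mulLeft ℂ Hm - LinearMap.mulRight ℂ Hm) +
    ∑ k, ((LinearMap.mulRight ℂ (Lk k)ᴴ).comp (LinearMap.mulLeft ℂ (Lk k)) -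
      ((1 : ℂ)/2) • (LinearMap.mulLeft ℂ ((Lk k)ᴴ * Lk k) +
        LinearMap.mulRight ℂ ((Lk k)ᴴ * Lk k)))

/-- `L` is a QDS (Lindblad) generator. -/
def IsLindblad (L : Matrix ι ι ℂ →ₗ[ℂ] Matrix ι ι ℂ) : Prop :=
  ∃ Hm : Matrix ι ι ℂ, Hm.IsHermitian ∧
    ∃ (m : ℕ) (Lk : Fin m → Matrix ι ι ℂ), L = lindbladMap Hm Lk

/-- `Ld` is the Hilbert–Schmidt adjoint of `L` (w.r.t. `⟨X,Y⟩ = Tr(X†Y)`). -/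
def IsHSAdjoint (L Ld : Matrix ι ι ℂ →ₗ[ℂ] Matrix ι ι ℂ) : Prop :=
  ∀ X Y : Matrix ι ι ℂ, ((Ld X)ᴴ * Y).trace = (Xᴴ * L Y).trace

/-- The fixed-point set of a (super)operator. -/
def fixSet (T : Matrix ι ι ℂ →ₗ[ℂ] Matrix ι ι ℂ) : Set (Matrix ι ι ℂ) := {X | T X = X}

/-- The support of an operator: the orthogonal complement of its kernel,
equivalently the range of its adjoint. -/
noncomputable def msupp (A : Matrix ι ι ℂ) : Submodule ℂ (ι → ℂ) := LinearMap.range (Aᴴ).mulVecLin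

/-- The support of a set of operators: the span of the union of their supports. -/
noncomputable def suppSet (W : Set (Matrix ι ι ℂ)) : Submodule ℂ (ι → ℂ) := ⨆ O ∈ W, msupp O

/-- The minimal modular-invariant distorted algebra generated by `W` relative to `ρ`:
the smallest subspace containing `W` that is closed under the adjoint, under the
`ρ`-modified product `(X,Y) ↦ X ρ⁻ Y`, and under the modular map `X ↦ ρ^{1/2} X ρ⁻^{1/2}`. -/
noncomputable def Fdist (ρ : Matrix ι ι ℂ) (W : Set (Matrix ι ι ℂ)) :
    Submodule ℂ (Matrix ι ι ℂ) :=
  sInf {S : Submodule ℂ (Matrix ι ι ℂ) | W ⊆ S ∧ (∀ X ∈ S, Xᴴ ∈ S) ∧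
    (∀ X ∈ S, ∀ Y ∈ S, X * mpinv ρ * Y ∈ S) ∧
    (∀ X ∈ S, msqrt ρ * X * mpinv (msqrt ρ) ∈ S)}

/-- `ρ` is globally asymptotically stable for the generator `L`: it is invariant and every
solution of `ẋ = L(x)` starting at a density operator converges to `ρ` as `t → ∞`. -/
def IsGAS (L : Matrix ι ι ℂ →ₗ[ℂ] Matrix ι ι ℂ) (ρ : Matrix ι ι ℂ) : Prop :=
  L ρ = 0 ∧
  ∀ σ : Matrix ι ι ℂ, IsDensity σ →
    ∀ x : ℝ → Matrix ι ι ℂ, x 0 = σ →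
      (∀ t : ℝ, ∀ i j, HasDerivAt (fun s : ℝ => x s i j) (L (x t) i j) t) →
      ∀ i j, Filter.Tendsto (fun t : ℝ => x t i j) Filter.atTop (nhds (ρ i j))

end Single

/-! ### Bipartite notions -/

section Bipartite

variable {α β : Type*} [Fintype α] [Fintype β] [DecidableEq α] [DecidableEq β]

/-- Partial trace over the second factor. -/
noncomputable def ptraceB (ρ : Matrix (α × β) (α × β) ℂ) : Matrix α α ℂ :=
  Matrix.of fun i j => ∑ k : β, ρ (i, k) (j, k)

/-- The operator Schmidt span of `ρ` on the first factor:
`{Tr_B[(I ⊗ B) ρ] : B ∈ B(H_B)}`. -/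
noncomputable def opSchmidtA (ρ : Matrix (α × β) (α × β) ℂ) : Set (Matrix α α ℂ) :=
  {A | ∃ B : Matrix β β ℂ,
    A = ptraceB ((Matrix.kroneckerMap (· * ·) (1 : Matrix α α ℂ) B) * ρ)}

/-- The (vector) Schmidt span of `v ∈ V_A ⊗ V_B` relative to `V_A`: the image of `v`
under partial inner products with vectors of `V_B`. -/
def vSchmidtA (v : α × β → ℂ) : Set (α → ℂ) :=
  {w | ∃ b : β → ℂ, w = fun a => ∑ j, (starRingEnd ℂ) (b j) * v (a, j)}

/-- `Σ_A(v) ⊗ V_B` as a subspace of `V_A ⊗ V_B`. -/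
noncomputable def extVSchmidtA (v : α × β → ℂ) : Submodule ℂ (α × β → ℂ) :=
  Submodule.span ℂ {v' | ∃ w ∈ vSchmidtA v, ∃ b : β → ℂ, v' = fun p => w p.1 * b p.2}

end Bipartite

/-! ### Multipartite notions -/

section Multipartite

variable {n : ℕ} {d : Fin n → Type*} [∀ a, Fintype (d a)] [∀ a, DecidableEq (d a)]

/-- Index type of the neighborhood factor `H_N`. -/
abbrev nbhdIdx (d : Fin n → Type*) (N : Finset (Fin n)) : Type _ :=
  ∀ a : {x : Fin n // x ∈ N}, d a

/-- Index type of the complementary factor `H_N̄`. -/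
abbrev nbhdCoIdx (d : Fin n → Type*) (N : Finset (Fin n)) : Type _ :=
  ∀ a : {x : Fin n // ¬ x ∈ N}, d a

/-- The factorization `H ≃ H_N ⊗ H_N̄` at the level of index types. -/
def splitEquiv (d : Fin n → Type*) (N : Finset (Fin n)) :
    (∀ a, d a) ≃ nbhdIdx d N × nbhdCoIdx d N :=
  Equiv.piEquivPiSubtypeProd (fun x => x ∈ N) d

variable (d)

/-- The operator `A ⊗ B` on `H = H_N ⊗ H_N̄`, viewed as an operator on `H`. -/
noncomputable def splitLift (N : Finset (Fin n))
    (A : Matrix (nbhdIdx d N) (nbhdIdx d N) ℂ)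
    (B : Matrix (nbhdCoIdx d N) (nbhdCoIdx d N) ℂ) :
    Matrix (∀ a, d a) (∀ a, d a) ℂ :=
  (Matrix.kroneckerMap (· * ·) A B).submatrix (splitEquiv d N) (splitEquiv d N)

/-- The neighborhood operator `A ⊗ I_N̄` on `H`. -/
noncomputable def nbhdLift (N : Finset (Fin n))
    (A : Matrix (nbhdIdx d N) (nbhdIdx d N) ℂ) : Matrix (∀ a, d a) (∀ a, d a) ℂ :=
  splitLift d N A 1

/-- The operator `I_N ⊗ B` on `H`. -/
noncomputable def coLift (N : Finset (Fin n))
    (B : Matrix (nbhdCoIdx d N) (nbhdCoIdx d N) ℂ) : Matrix (∀ a, d a) (∀ a, d a) ℂ :=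
  splitLift d N 1 B

/-- The reduced state `ρ_N = Tr_N̄(ρ)` on the neighborhood `N`. -/
noncomputable def nbhdPtrace (N : Finset (Fin n)) (ρ : Matrix (∀ a, d a) (∀ a, d a) ℂ) :
    Matrix (nbhdIdx d N) (nbhdIdx d N) ℂ :=
  Matrix.of fun i j => ∑ k : nbhdCoIdx d N,
    ρ ((splitEquiv d N).symm (i, k)) ((splitEquiv d N).symm (j, k))

/-- The operator Schmidt span of `ρ` on the neighborhood `N`:
`Σ_N(ρ) = {Tr_N̄[(I_N ⊗ B) ρ] : B}`. -/
noncomputable def nbhdSchmidt (N : Finset (Fin n)) (ρ : Matrix (∀ a, d a) (∀ a, d a) ℂ) :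
    Set (Matrix (nbhdIdx d N) (nbhdIdx d N) ℂ) :=
  {A | ∃ B : Matrix (nbhdCoIdx d N) (nbhdCoIdx d N) ℂ,
    A = nbhdPtrace d N (coLift d N B * ρ)}

/-- The extended minimal modular-invariant distorted algebra
`F_{ρ_N}(Σ_N(ρ)) ⊗ B(H_N̄)` as a subspace of `B(H)`. -/
noncomputable def extF (N : Finset (Fin n)) (ρ : Matrix (∀ a, d a) (∀ a, d a) ℂ) :
    Submodule ℂ (Matrix (∀ a, d a) (∀ a, d a) ℂ) :=
  Submodule.span ℂ {X | ∃ A ∈ Fdist (nbhdPtrace d N ρ) (nbhdSchmidt d N ρ),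
    ∃ B : Matrix (nbhdCoIdx d N) (nbhdCoIdx d N) ℂ, X = splitLift d N A B}

/-- A neighborhood QDS generator for `N`: a Lindblad generator whose Hamiltonian and
noise operators all act as `X_N ⊗ I_N̄`. -/
def IsNbhdGen (N : Finset (Fin n))
    (L : Matrix (∀ a, d a) (∀ a, d a) ℂ →ₗ[ℂ] Matrix (∀ a, d a) (∀ a, d a) ℂ) : Prop :=
  ∃ HN : Matrix (nbhdIdx d N) (nbhdIdx d N) ℂ, HN.IsHermitian ∧
    ∃ (m : ℕ) (Lk : Fin m → Matrix (nbhdIdx d N) (nbhdIdx d N) ℂ),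
      L = lindbladMap (nbhdLift d N HN) fun k => nbhdLift d N (Lk k)

/-- A purely dissipative neighborhood generator for `N` (zero Hamiltonian in some
Lindblad representation). -/
def IsDissipNbhdGen (N : Finset (Fin n))
    (L : Matrix (∀ a, d a) (∀ a, d a) ℂ →ₗ[ℂ] Matrix (∀ a, d a) (∀ a, d a) ℂ) : Prop :=
  ∃ (m : ℕ) (Lk : Fin m → Matrix (nbhdIdx d N) (nbhdIdx d N) ℂ),
    L = lindbladMap 0 fun k => nbhdLift d N (Lk k)

/-- The family of neighborhood generators `Lj` is frustration free: every invariant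
state of the sum is invariant for each component. -/
def IsFFFamily {M : ℕ}
    (Lj : Fin M → (Matrix (∀ a, d a) (∀ a, d a) ℂ →ₗ[ℂ] Matrix (∀ a, d a) (∀ a, d a) ℂ)) :
    Prop :=
  ∀ ρ : Matrix (∀ a, d a) (∀ a, d a) ℂ, IsDensity ρ → (∑ j, Lj j) ρ = 0 → ∀ j, Lj j ρ = 0

/-- `ρ` is frustration-free quasi-locally stabilizable relative to the neighborhood
structure `Nb`. -/
def IsFFQLS {M : ℕ} (Nb : Fin M → Finset (Fin n))
    (ρ : Matrix (∀ a, d a) (∀ a, d a) ℂ) : Prop :=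
  ∃ Lj : Fin M → (Matrix (∀ a, d a) (∀ a, d a) ℂ →ₗ[ℂ] Matrix (∀ a, d a) (∀ a, d a) ℂ),
    (∀ j, IsNbhdGen d (Nb j) (Lj j)) ∧ IsFFFamily d Lj ∧ IsGAS (∑ j, Lj j) ρ

/-- A pure state `|ψ⟩⟨ψ|` is dissipatively quasi-locally stabilizable relative to `Nb`:
it is GAS for a QL generator whose components have zero Hamiltonian and neighborhood
noise operators annihilating `ψ`. -/
def IsDQLS {M : ℕ} (Nb : Fin M → Finset (Fin n)) (ψ : (∀ a, d a) → ℂ) : Prop :=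
  ∃ Lj : Fin M → (Matrix (∀ a, d a) (∀ a, d a) ℂ →ₗ[ℂ] Matrix (∀ a, d a) (∀ a, d a) ℂ),
    (∀ j, ∃ (m : ℕ) (Dk : Fin m → Matrix (nbhdIdx d (Nb j)) (nbhdIdx d (Nb j)) ℂ),
      Lj j = lindbladMap 0 (fun k => nbhdLift d (Nb j) (Dk k)) ∧
      ∀ k, (nbhdLift d (Nb j) (Dk k)).mulVec ψ = 0) ∧
    IsGAS (∑ j, Lj j) (Matrix.vecMulVec ψ (star ψ))

/-- The (vector) Schmidt span of `ψ` relative to the neighborhood factor `H_N`. -/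
def vecSchmidt (N : Finset (Fin n)) (ψ : (∀ a, d a) → ℂ) : Set (nbhdIdx d N → ℂ) :=
  {w | ∃ b : nbhdCoIdx d N → ℂ,
    w = fun i => ∑ k, (starRingEnd ℂ) (b k) * ψ ((splitEquiv d N).symm (i, k))}

/-- `Σ_N(ψ) ⊗ H_N̄` as a subspace of `H`. -/
noncomputable def extVecSchmidt (N : Finset (Fin n)) (ψ : (∀ a, d a) → ℂ) :
    Submodule ℂ ((∀ a, d a) → ℂ) :=
  Submodule.span ℂ {v | ∃ w ∈ vecSchmidt d N ψ, ∃ b : nbhdCoIdx d N → ℂ,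
    v = fun x => w ((splitEquiv d N) x).1 * b ((splitEquiv d N) x).2}

end Multipartite

section Helpers

set_option linter.unusedSectionVars false

variable {ι : Type*} [Fintype ι] [DecidableEq ι]

lemma lindblad_apply (Hm : Matrix ι ι ℂ) {m : ℕ} (Lk : Fin m → Matrix ι ι ℂ)
    (X : Matrix ι ι ℂ) :
    lindbladMap Hm Lk X = (-Complex.I) • (Hm * X - X * Hm) +
      ∑ k, (Lk k * X * (Lk k)ᴴ - ((1 : ℂ)/2) • ((Lk k)ᴴ * Lk k * X + X * ((Lk k)ᴴ * Lk k))) := by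
  simp [lindbladMap, LinearMap.sum_apply, mul_assoc]

/-- The Heisenberg-picture generator. -/
noncomputable def heis (Hm : Matrix ι ι ℂ) {m : ℕ} (Lk : Fin m → Matrix ι ι ℂ)
    (X : Matrix ι ι ℂ) : Matrix ι ι ℂ :=
  Complex.I • (Hm * X - X * Hm) +
      ∑ k, ((Lk k)ᴴ * X * Lk k - ((1 : ℂ)/2) • ((Lk k)ᴴ * Lk k * X + X * ((Lk k)ᴴ * Lk k)))

lemma heis_conj (Hm : Matrix ι ι ℂ) (hH : Hm.IsHermitian) {m : ℕ} (Lk : Fin m → Matrix ι ι ℂ)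
    (X : Matrix ι ι ℂ) : (heis Hm Lk X)ᴴ = heis Hm Lk Xᴴ := by
  simp only [heis, conjTranspose_add, conjTranspose_smul, conjTranspose_sub, conjTranspose_mul,
    conjTranspose_sum, conjTranspose_conjTranspose, hH.eq]
  congr 1
  · rw [show star Complex.I = -Complex.I from Complex.conj_I]
    rw [neg_smul, ← smul_neg, neg_sub]
  · refine Finset.sum_congr rfl fun k _ => ?_
    rw [show star ((1:ℂ)/2) = 1/2 by simp]
    rw [add_comm]
    simp only [mul_assoc]

lemma adjoint_eq_heis (Hm : Matrix ι ι ℂ) (hH : Hm.IsHermitian) {m : ℕ}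
    (Lk : Fin m → Matrix ι ι ℂ) (Ld : Matrix ι ι ℂ →ₗ[ℂ] Matrix ι ι ℂ)
    (hLd : IsHSAdjoint (lindbladMap Hm Lk) Ld) (X : Matrix ι ι ℂ) :
    Ld X = heis Hm Lk X := by
  apply conjTranspose_injective
  rw [ext_iff_trace_mul_right]
  intro Y
  rw [hLd X Y, heis_conj Hm hH, lindblad_apply, heis]
  simp only [mul_add, add_mul, trace_add, Finset.mul_sum, Finset.sum_mul, trace_sum, mul_sub,
    sub_mul, trace_sub, mul_smul_comm, smul_mul_assoc, trace_smul]
  congr 1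
  · rw [show (Xᴴ * (Y * Hm)).trace = (Hm * Xᴴ * Y).trace by
      rw [← mul_assoc, trace_mul_comm, mul_assoc]]
    simp only [smul_eq_mul, mul_assoc]; ring
  · refine Finset.sum_congr rfl fun k _ => ?_
    rw [show (Xᴴ * (Lk k * Y * (Lk k)ᴴ)).trace = ((Lk k)ᴴ * Xᴴ * Lk k * Y).trace by
      rw [← mul_assoc, trace_mul_comm]; simp only [mul_assoc]]
    rw [show (Xᴴ * (Y * ((Lk k)ᴴ * Lk k))).trace = ((Lk k)ᴴ * Lk k * Xᴴ * Y).trace by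
      rw [← mul_assoc, trace_mul_comm]; simp only [mul_assoc]]
    simp only [smul_eq_mul, mul_assoc]; ring

lemma heis_dissip (Hm : Matrix ι ι ℂ) {m : ℕ} (Lk : Fin m → Matrix ι ι ℂ)
    (X Y : Matrix ι ι ℂ) :
    heis Hm Lk (X * Y) = heis Hm Lk X * Y + X * heis Hm Lk Y +
      ∑ k, ((X * (Lk k)ᴴ - (Lk k)ᴴ * X) * (Lk k * Y - Y * Lk k)) := by
  simp only [heis, add_mul, mul_add, Finset.sum_mul, Finset.mul_sum]
  have : ∀ a b c d e f g : Matrix ι ι ℂ, a = c + e → b = d + f + g →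
      a + b = (c + d) + (e + f) + g := by
    intros; subst_vars; abel
  apply this
  · rw [smul_mul_assoc, mul_smul_comm, ← smul_add]; congr 1; noncomm_ring
  · rw [← Finset.sum_add_distrib, ← Finset.sum_add_distrib]
    refine Finset.sum_congr rfl fun k _ => ?_
    simp only [sub_mul, mul_sub, smul_mul_assoc, mul_smul_comm, mul_add, add_mul, smul_add,
      mul_assoc]
    module

/-- The commutation set. -/
def genSet (Hm : Matrix ι ι ℂ) {m : ℕ} (Lk : Fin m → Matrix ι ι ℂ) : Set (Matrix ι ι ℂ) :=
  {Y | Y = Hm ∨ (∃ k, Y = Lk k) ∨ (∃ k, Y = (Lk k)ᴴ)}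

lemma genSet_star (Hm : Matrix ι ι ℂ) (hH : Hm.IsHermitian) {m : ℕ} (Lk : Fin m → Matrix ι ι ℂ) :
    ∀ Y ∈ genSet Hm Lk, Yᴴ ∈ genSet Hm Lk := by
  rintro Y (rfl | ⟨k, rfl⟩ | ⟨k, rfl⟩)
  · left; exact hH
  · right; right; exact ⟨k, rfl⟩
  · right; left; exact ⟨k, by simp⟩

lemma comm_of_ker {ρ : Matrix ι ι ℂ} (hρ : ρ.PosDef)
    (Hm : Matrix ι ι ℂ) (hH : Hm.IsHermitian) {m : ℕ} (Lk : Fin m → Matrix ι ι ℂ)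
    (hfix : ∀ Z, (heis Hm Lk Z * ρ).trace = 0)
    (X : Matrix ι ι ℂ) (hX : heis Hm Lk X = 0) : ∀ k, Lk k * X = X * Lk k := by
  have h1 := hfix (Xᴴ * X)
  have hX' : heis Hm Lk Xᴴ = 0 := by rw [← heis_conj Hm hH, hX, conjTranspose_zero]
  rw [heis_dissip, hX, hX', zero_mul, mul_zero, add_zero, zero_add, Finset.sum_mul,
    trace_sum] at h1
  have key : ∀ k, ((Xᴴ * (Lk k)ᴴ - (Lk k)ᴴ * Xᴴ) * (Lk k * X - X * Lk k) * ρ).trace =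
      ((Lk k * X - X * Lk k) * ρ * (Lk k * X - X * Lk k)ᴴ).trace := by
    intro k
    rw [mul_assoc, trace_mul_comm]
    simp only [conjTranspose_sub, conjTranspose_mul]
  simp only [key] at h1
  have hps : ∀ k, ((Lk k * X - X * Lk k) * ρ * (Lk k * X - X * Lk k)ᴴ).PosSemidef :=
    fun k => hρ.posSemidef.mul_mul_conjTranspose_same _
  rw [Finset.sum_eq_zero_iff_of_nonneg (fun k _ => (hps k).trace_nonneg)] at h1
  intro k
  have h2 := (hps k).trace_eq_zero_iff.1 (h1 k (Finset.mem_univ k))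
  set C := Lk k * X - X * Lk k with hC
  have : C = 0 := by
    by_contra hne
    have : ∃ i, (fun j => star (C i j)) ≠ 0 := by
      by_contra hcon
      push Not at hcon
      apply hne
      ext i j
      have := congrFun (hcon i) j
      simpa using this
    obtain ⟨i, hi⟩ := this
    have hpos := hρ.dotProduct_mulVec_pos hi
    have h3 := congrFun (congrFun h2 i) i
    have : star (fun j => star (C i j)) ⬝ᵥ ρ *ᵥ (fun j => star (C i j)) = (C * ρ * Cᴴ) i i := by
      rw [mul_assoc]
      simp [mul_apply, dotProduct, mulVec, conjTranspose_apply]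
    rw [this, h3] at hpos
    simp at hpos
  exact sub_eq_zero.1 this

lemma ker_heis {ρ : Matrix ι ι ℂ} (hρ : ρ.PosDef)
    (Hm : Matrix ι ι ℂ) (hH : Hm.IsHermitian) {m : ℕ} (Lk : Fin m → Matrix ι ι ℂ)
    (hfix : ∀ Z, (heis Hm Lk Z * ρ).trace = 0)
    (X : Matrix ι ι ℂ) :
    heis Hm Lk X = 0 ↔ X ∈ Subalgebra.centralizer ℂ (genSet Hm Lk) := by
  rw [Subalgebra.mem_centralizer_iff]
  constructor
  · intro hX
    have hX' : heis Hm Lk Xᴴ = 0 := by rw [← heis_conj Hm hH, hX, conjTranspose_zero]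
    have c1 := comm_of_ker hρ Hm hH Lk hfix X hX
    have c2 : ∀ k, (Lk k)ᴴ * X = X * (Lk k)ᴴ := by
      intro k
      have := congrArg conjTranspose (comm_of_ker hρ Hm hH Lk hfix Xᴴ hX' k)
      simpa using this.symm
    rintro g (rfl | ⟨k, rfl⟩ | ⟨k, rfl⟩)
    · rw [heis, Finset.sum_eq_zero, add_zero] at hX
      · exact sub_eq_zero.1 ((smul_eq_zero.1 hX).resolve_left Complex.I_ne_zero)
      · intro k _
        rw [c2, mul_assoc ((Lk k)ᴴ), c1 k, ← mul_assoc ((Lk k)ᴴ), c2 k, mul_assoc]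
        module
    · exact c1 k
    · exact c2 k
  · intro h
    have c1 : ∀ k, Lk k * X = X * Lk k := fun k => h _ (Or.inr (Or.inl ⟨k, rfl⟩))
    have c2 : ∀ k, (Lk k)ᴴ * X = X * (Lk k)ᴴ := fun k => h _ (Or.inr (Or.inr ⟨k, rfl⟩))
    rw [heis, h _ (Or.inl rfl), sub_self, smul_zero, zero_add]
    refine Finset.sum_eq_zero fun k _ => ?_
    rw [c2, mul_assoc ((Lk k)ᴴ), c1 k, ← mul_assoc ((Lk k)ᴴ), c2 k, mul_assoc]
    module

lemma lindblad_mul_left (Hm : Matrix ι ι ℂ) {m : ℕ} (Lk : Fin m → Matrix ι ι ℂ)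
    (X Y : Matrix ι ι ℂ) (h : X ∈ Subalgebra.centralizer ℂ (genSet Hm Lk)) :
    lindbladMap Hm Lk (X * Y) = X * lindbladMap Hm Lk Y := by
  rw [Subalgebra.mem_centralizer_iff] at h
  have c0 : Hm * X = X * Hm := h _ (Or.inl rfl)
  have c1 : ∀ k, Lk k * X = X * Lk k := fun k => h _ (Or.inr (Or.inl ⟨k, rfl⟩))
  have c2 : ∀ k, (Lk k)ᴴ * X = X * (Lk k)ᴴ := fun k => h _ (Or.inr (Or.inr ⟨k, rfl⟩))
  rw [lindblad_apply, lindblad_apply, mul_add, mul_smul_comm, Finset.mul_sum]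
  congr 1
  · rw [← mul_assoc, c0]; simp only [mul_sub, mul_assoc]
  · refine Finset.sum_congr rfl fun k _ => ?_
    rw [← mul_assoc, c1, ← mul_assoc, mul_assoc ((Lk k)ᴴ), c1, ← mul_assoc ((Lk k)ᴴ), c2]
    simp only [mul_sub, mul_assoc, mul_smul_comm, mul_add]

lemma lindblad_mul_right (Hm : Matrix ι ι ℂ) {m : ℕ} (Lk : Fin m → Matrix ι ι ℂ)
    (X Y : Matrix ι ι ℂ) (h : X ∈ Subalgebra.centralizer ℂ (genSet Hm Lk)) :
    lindbladMap Hm Lk (Y * X) = lindbladMap Hm Lk Y * X := by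
  rw [Subalgebra.mem_centralizer_iff] at h
  have c0 : Hm * X = X * Hm := h _ (Or.inl rfl)
  have c1 : ∀ k, Lk k * X = X * Lk k := fun k => h _ (Or.inr (Or.inl ⟨k, rfl⟩))
  have c2 : ∀ k, (Lk k)ᴴ * X = X * (Lk k)ᴴ := fun k => h _ (Or.inr (Or.inr ⟨k, rfl⟩))
  rw [lindblad_apply, lindblad_apply, add_mul, smul_mul_assoc, Finset.sum_mul]
  congr 1
  · simp only [sub_mul, mul_assoc, c0]
  · refine Finset.sum_congr rfl fun k _ => ?_
    simp only [sub_mul, mul_assoc, smul_mul_assoc, add_mul, c1, c2]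
    rw [← mul_assoc ((Lk k)ᴴ) X, c2, mul_assoc X]

/-- Spectral theorem in elementary form. -/
lemma spec_form (y : Matrix ι ι ℂ) (hy : y.IsHermitian) :
    ∃ (U : Matrix ι ι ℂ) (μ : ι → ℝ), Uᴴ * U = 1 ∧ U * Uᴴ = 1 ∧
      y = U * diagonal (fun i => (μ i : ℂ)) * Uᴴ ∧ μ = hy.eigenvalues := by
  refine ⟨hy.eigenvectorUnitary, hy.eigenvalues, ?_, ?_, ?_, rfl⟩
  · exact Unitary.coe_star_mul_self hy.eigenvectorUnitary
  · exact Unitary.coe_mul_star_self hy.eigenvectorUnitary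
  · have := hy.spectral_theorem
    rw [Unitary.conjStarAlgAut_apply] at this
    exact this

lemma exists_spec (y : Matrix ι ι ℂ) (hy : y.IsHermitian) :
    ∃ (T : Finset ℝ) (q : ℝ → Matrix ι ι ℂ),
      (∀ μ, (q μ)ᴴ = q μ ∧ q μ * q μ = q μ ∧ q μ * y = (μ : ℂ) • q μ ∧
        ∀ z, z * y = y * z → z * q μ = q μ * z) ∧ ∑ μ ∈ T, q μ = 1 := by
  obtain ⟨U, l, h1, h2, h3, -⟩ := spec_form y hy
  set D : ℝ → Matrix ι ι ℂ := fun μ => diagonal (fun i => if l i = μ then (1:ℂ) else 0) with hD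
  have hUU : ∀ M : Matrix ι ι ℂ, Uᴴ * (U * M) = M := fun M => by rw [← mul_assoc, h1, one_mul]
  refine ⟨Finset.univ.image l, fun μ => U * D μ * Uᴴ, ?_, ?_⟩
  · intro μ
    refine ⟨?_, ?_, ?_, ?_⟩
    · simp only [conjTranspose_mul, conjTranspose_conjTranspose, mul_assoc]
      congr 2
      rw [hD, diagonal_conjTranspose]
      congr 1; ext i; simp [apply_ite]
    · simp only [mul_assoc, hUU]
      rw [← mul_assoc (D μ)]
      congr 2
      simp [hD, diagonal_mul_diagonal]
    · rw [h3]
      rw [← smul_mul_assoc, ← mul_smul_comm]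
      simp only [mul_assoc, hUU]
      rw [← mul_assoc (D μ)]
      congr 2
      ext i j
      by_cases hij : i = j
      · subst hij; by_cases h : l i = μ <;> simp [hD, h]
      · simp [hD, hij]
    · intro z hz
      have hz' : (Uᴴ * z * U) * diagonal (fun i => (l i : ℂ)) =
          diagonal (fun i => (l i : ℂ)) * (Uᴴ * z * U) := by
        have := congrArg (fun M => Uᴴ * M * U) hz
        rw [h3] at this
        simp only [mul_assoc, hUU, h1, mul_one] at this ⊢
        exact this
      have hz'' : (Uᴴ * z * U) * D μ = D μ * (Uᴴ * z * U) := by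
        ext i j
        have := congrFun (congrFun hz' i) j
        simp only [mul_diagonal, diagonal_mul] at this
        simp only [hD, mul_diagonal, diagonal_mul]
        by_cases hij : l i = l j
        · rw [hij, mul_comm]
        · have h0 : (Uᴴ * z * U) i j = 0 := by
            have h4 : ((l j : ℂ) - l i) * (Uᴴ * z * U) i j = 0 := by
              rw [sub_mul, ← this]; ring
            rcases mul_eq_zero.1 h4 with h5 | h5
            · exfalso; apply hij
              have := sub_eq_zero.1 h5
              exact_mod_cast this.symm
            · exact h5
          rw [h0, zero_mul, mul_zero]
      have := congrArg (fun M => U * M * Uᴴ) hz''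
      have hU2 : ∀ M : Matrix ι ι ℂ, U * (Uᴴ * M) = M := fun M => by rw [← mul_assoc, h2, one_mul]
      simp only [mul_assoc, hU2, h2, mul_one] at this ⊢
      exact this
  · rw [← Finset.sum_mul, ← Finset.mul_sum]
    have : ∑ μ ∈ Finset.univ.image l, D μ = 1 := by
      ext i j
      rw [Matrix.sum_apply]
      by_cases hij : i = j
      · subst hij; simp [hD]
      · simp [hD, hij]
    rw [this, mul_one, h2]

/-- A projection is `F Fᴴ` for an isometry `F`. -/
lemma proj_factor (P : Matrix ι ι ℂ) (hP : P.IsHermitian) (hPP : P * P = P) :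
    ∃ (k : ℕ) (F : Matrix ι (Fin k) ℂ), Fᴴ * F = 1 ∧ F * Fᴴ = P := by
  obtain ⟨U, l, h1, h2, h3, -⟩ := spec_form P hP
  have hl : ∀ i, l i = 0 ∨ l i = 1 := by
    intro i
    have h4 : diagonal (fun i => (l i : ℂ)) = Uᴴ * P * U := by
      rw [h3]; simp only [mul_assoc, h1, mul_one]; rw [← mul_assoc, h1, one_mul]
    have h5 : diagonal (fun i => (l i : ℂ)) * diagonal (fun i => (l i : ℂ)) =
        diagonal (fun i => (l i : ℂ)) := by
      rw [h4, mul_assoc, mul_assoc, ← mul_assoc U, ← mul_assoc U, h2, one_mul, ← mul_assoc P, hPP,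
        mul_assoc]
    have := congrFun (congrFun h5 i) i
    simp only [diagonal_mul_diagonal, diagonal_apply_eq] at this
    have h6 : l i * l i = l i := by exact_mod_cast this
    have : l i * (l i - 1) = 0 := by rw [mul_sub, h6]; ring
    rcases mul_eq_zero.1 this with h | h
    · left; exact h
    · right; linarith
  let J := {i // l i = 1}
  let g : Fin (Fintype.card J) ≃ J := (Fintype.equivFin J).symm
  refine ⟨Fintype.card J, U.submatrix id (fun a => (g a).1), ?_, ?_⟩
  · have : (U.submatrix id (fun a => (g a).1))ᴴ * U.submatrix id (fun a => (g a).1) =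
        (Uᴴ * U).submatrix (fun a => (g a).1) (fun a => (g a).1) := by
      ext a b; simp [mul_apply]
    rw [this, h1]
    exact submatrix_one _ (fun a b hab => g.injective (Subtype.ext hab))
  · ext i j
    rw [h3]
    rw [mul_apply, mul_apply]
    simp only [submatrix_apply, conjTranspose_apply, mul_diagonal, id]
    rw [Equiv.sum_comp g (fun x : J => U i x.1 * star (U j x.1)),
      ← Finset.sum_subtype (Finset.univ.filter fun i => l i = 1) (by simp)
        (fun x => U i x * star (U j x)), Finset.sum_filter]
    refine Finset.sum_congr rfl fun x _ => ?_
    rcases hl x with h | h <;> simp [h]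

/-- `e` is a self-adjoint projection in `A`. -/
def IsPr (A : Subalgebra ℂ (Matrix ι ι ℂ)) (e : Matrix ι ι ℂ) : Prop :=
  e ∈ A ∧ eᴴ = e ∧ e * e = e

/-- `e` is scalar-minimal. -/
def IsScal (A : Subalgebra ℂ (Matrix ι ι ℂ)) (e : Matrix ι ι ℂ) : Prop :=
  ∀ x ∈ A, ∃ c : ℂ, e * x * e = c • e

lemma centralizer_star {S : Set (Matrix ι ι ℂ)} (hS : ∀ s ∈ S, sᴴ ∈ S) {x : Matrix ι ι ℂ}
    (hx : x ∈ Subalgebra.centralizer ℂ S) : xᴴ ∈ Subalgebra.centralizer ℂ S := by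
  rw [Subalgebra.mem_centralizer_iff] at hx ⊢
  intro g hg
  have := congrArg conjTranspose (hx _ (hS g hg))
  simpa using this.symm

lemma exists_split {S : Set (Matrix ι ι ℂ)} (hS : ∀ s ∈ S, sᴴ ∈ S) {e : Matrix ι ι ℂ}
    (he : IsPr (Subalgebra.centralizer ℂ S) e)
    (hns : ¬ IsScal (Subalgebra.centralizer ℂ S) e) :
    ∃ e', IsPr (Subalgebra.centralizer ℂ S) e' ∧ e' ≠ 0 ∧ e' ≠ e ∧ e * e' = e' ∧ e' * e = e' := by
  set A := Subalgebra.centralizer ℂ S with hA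
  obtain ⟨heA, hes, hee⟩ := he
  by_contra hcon
  push Not at hcon
  have herm : ∀ x ∈ A, xᴴ = x → ∃ c : ℂ, e * x * e = c • e := by
    intro x hx hxs
    have hy : (e * x * e).IsHermitian := by
      rw [IsHermitian]; simp [hes, hxs, mul_assoc]
    obtain ⟨T, q, hq, hsum⟩ := exists_spec _ hy
    have hyA : e * x * e ∈ A := A.mul_mem (A.mul_mem heA hx) heA
    have hqA : ∀ μ, q μ ∈ A := by
      intro μ
      rw [hA, Subalgebra.mem_centralizer_iff] at hyA ⊢
      intro g hg
      exact (hq μ).2.2.2 g (hyA g hg)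
    have heq : ∀ μ, e * q μ = q μ * e := by
      intro μ
      apply (hq μ).2.2.2
      simp only [mul_assoc, hee]
      simp only [← mul_assoc, hee]
    have hpr : ∀ μ, IsPr A (e * q μ) := by
      intro μ
      refine ⟨A.mul_mem heA (hqA μ), ?_, ?_⟩
      · rw [conjTranspose_mul, hes, (hq μ).1, heq]
      · rw [mul_assoc, ← mul_assoc (q μ), ← heq, mul_assoc e (q μ) (q μ), (hq μ).2.1, ← mul_assoc,
          hee]
    have hdich : ∀ μ, e * q μ = 0 ∨ e * q μ = e := by
      intro μ
      by_contra h
      push Not at h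
      apply hcon _ (hpr μ) h.1 h.2
      · rw [← mul_assoc, hee]
      · rw [mul_assoc, ← heq, ← mul_assoc, hee]
    by_cases hall : ∀ μ ∈ T, e * q μ = 0
    · have : e = 0 := by
        rw [← mul_one e, ← hsum, Finset.mul_sum]
        exact Finset.sum_eq_zero hall
      exact ⟨0, by simp [this]⟩
    · push Not at hall
      obtain ⟨μ, -, hμ⟩ := hall
      have h1 := (hdich μ).resolve_left hμ
      refine ⟨μ, ?_⟩
      have h2 := (hq μ).2.2.1
      calc e * x * e = e * (e * x * e) := by simp only [← mul_assoc, hee]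
        _ = e * q μ * (e * x * e) := by rw [h1]
        _ = (μ : ℂ) • (e * q μ) := by rw [mul_assoc, h2, mul_smul_comm]
        _ = (μ : ℂ) • e := by rw [h1]
  apply hns
  intro x hx
  have hxs : xᴴ ∈ A := centralizer_star hS hx
  obtain ⟨c, hc⟩ := herm (x + xᴴ) (A.add_mem hx hxs) (by simp [add_comm])
  obtain ⟨d, hd⟩ := herm (Complex.I • (x - xᴴ)) (A.smul_mem (A.sub_mem hx hxs) _) (by
    rw [conjTranspose_smul, show star Complex.I = -Complex.I from Complex.conj_I]
    simp [neg_smul, ← smul_neg])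
  refine ⟨(c - Complex.I * d) / 2, ?_⟩
  have hx2 : x = (1/2 : ℂ) • ((x + xᴴ) + (-Complex.I) • (Complex.I • (x - xᴴ))) := by
    rw [smul_smul, show -Complex.I * Complex.I = 1 by simp]
    module
  rw [hx2, mul_smul_comm, smul_mul_assoc, mul_add, add_mul, mul_smul_comm _ e (Complex.I • _),
    smul_mul_assoc, hc, hd]
  module

lemma exists_decomp {S : Set (Matrix ι ι ℂ)} (hS : ∀ s ∈ S, sᴴ ∈ S) :
    ∀ (V : Submodule ℂ (ι → ℂ)) (e : Matrix ι ι ℂ), IsPr (Subalgebra.centralizer ℂ S) e →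
      LinearMap.range e.mulVecLin = V →
      ∃ (n : ℕ) (P : Fin n → Matrix ι ι ℂ),
        (∀ i, IsPr (Subalgebra.centralizer ℂ S) (P i) ∧ P i ≠ 0 ∧
          IsScal (Subalgebra.centralizer ℂ S) (P i)) ∧
        (∀ i j, i ≠ j → P i * P j = 0) ∧ ∑ i, P i = e := by
  intro V
  induction V using WellFoundedLT.induction with
  | ind V ih =>
  intro e he hV
  by_cases h0 : e = 0
  · exact ⟨0, fun i => i.elim0, fun i => i.elim0, fun i => i.elim0, by simp [h0]⟩
  by_cases hs : IsScal (Subalgebra.centralizer ℂ S) e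
  · exact ⟨1, fun _ => e, fun _ => ⟨he, h0, hs⟩, fun i j hij => (hij (Subsingleton.elim _ _)).elim,
      by simp⟩
  obtain ⟨f, hf, hf0, hfe, hef, hfe'⟩ := exists_split hS he hs
  have hlt : ∀ g : Matrix ι ι ℂ, g * g = g → g ≠ e → e * g = g → g * e = g →
      LinearMap.range g.mulVecLin < V := by
    intro g hgg hge h1 h2
    rw [← hV]
    refine lt_of_le_of_ne ?_ ?_
    · rintro _ ⟨v, rfl⟩
      exact ⟨g *ᵥ v, by simp [h1]⟩
    · intro heq
      apply hge
      rw [← h2]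
      apply Matrix.ext_of_mulVec_single
      intro i
      have : e *ᵥ Pi.single i 1 ∈ LinearMap.range g.mulVecLin := by
        rw [heq]; exact ⟨_, rfl⟩
      obtain ⟨w, hw⟩ := this
      rw [mulVecLin_apply] at hw
      rw [← mulVec_mulVec, ← hw, mulVec_mulVec, hgg]
  have hg : IsPr (Subalgebra.centralizer ℂ S) (e - f) := by
    refine ⟨Subalgebra.sub_mem _ he.1 hf.1, ?_, ?_⟩
    · rw [conjTranspose_sub, he.2.1, hf.2.1]
    · rw [sub_mul, mul_sub, mul_sub, he.2.2, hef, hfe', hf.2.2]; abel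
  have hfg : f * (e - f) = 0 := by rw [mul_sub, hfe', hf.2.2, sub_self]
  have hgf : (e - f) * f = 0 := by rw [sub_mul, hef, hf.2.2, sub_self]
  obtain ⟨n, P, hP1, hP2, hP3⟩ := ih _ (hlt f hf.2.2 hfe hef hfe') f hf rfl
  obtain ⟨m, Q, hQ1, hQ2, hQ3⟩ := ih _ (hlt (e - f) hg.2.2
    (fun h => hf0 (by simpa using h)) (by rw [mul_sub, he.2.2, hef])
      (by rw [sub_mul, he.2.2, hfe'])) (e - f) hg rfl
  have hPf : ∀ i, P i * f = P i := by
    intro i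
    rw [← hP3, Finset.mul_sum, Finset.sum_eq_single i, (hP1 i).1.2.2]
    · intro j _ hj; exact hP2 _ _ hj.symm
    · simp
  have hfP : ∀ i, f * P i = P i := by
    intro i
    rw [← hP3, Finset.sum_mul, Finset.sum_eq_single i, (hP1 i).1.2.2]
    · intro j _ hj; exact hP2 _ _ hj
    · simp
  have hQg : ∀ i, Q i * (e - f) = Q i := by
    intro i
    rw [← hQ3, Finset.mul_sum, Finset.sum_eq_single i, (hQ1 i).1.2.2]
    · intro j _ hj; exact hQ2 _ _ hj.symm
    · simp
  have hgQ : ∀ i, (e - f) * Q i = Q i := by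
    intro i
    rw [← hQ3, Finset.sum_mul, Finset.sum_eq_single i, (hQ1 i).1.2.2]
    · intro j _ hj; exact hQ2 _ _ hj
    · simp
  refine ⟨n + m, Fin.addCases P Q, ?_, ?_, ?_⟩
  · intro i
    refine Fin.addCases (fun i => ?_) (fun i => ?_) i
    · simpa using hP1 i
    · simpa using hQ1 i
  · intro i j
    refine Fin.addCases (fun i => ?_) (fun i => ?_) i <;>
    refine Fin.addCases (fun j => ?_) (fun j => ?_) j <;> intro hij
    · simpa using hP2 i j (fun h => hij (by rw [h]))
    · simp only [Fin.addCases_left, Fin.addCases_right]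
      rw [← hPf, ← hgQ, mul_assoc, ← mul_assoc f, hfg, zero_mul, mul_zero]
    · simp only [Fin.addCases_left, Fin.addCases_right]
      rw [← hQg, ← hfP, mul_assoc, ← mul_assoc (e - f), hgf, zero_mul, mul_zero]
    · simpa using hQ2 i j (fun h => hij (by rw [h]))
  · rw [Fin.sum_univ_add]
    simp only [Fin.addCases_left, Fin.addCases_right]
    rw [hP3, hQ3]; abel

lemma exists_pisom {S : Set (Matrix ι ι ℂ)} (hS : ∀ s ∈ S, sᴴ ∈ S) {e f x : Matrix ι ι ℂ}
    (he : IsPr (Subalgebra.centralizer ℂ S) e) (hf : IsPr (Subalgebra.centralizer ℂ S) f)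
    (hes : IsScal (Subalgebra.centralizer ℂ S) e) (hfs : IsScal (Subalgebra.centralizer ℂ S) f)
    (hx : x ∈ Subalgebra.centralizer ℂ S) (hne : e * x * f ≠ 0) :
    ∃ u ∈ Subalgebra.centralizer ℂ S, u * uᴴ = e ∧ uᴴ * u = f := by
  set A := Subalgebra.centralizer ℂ S with hA
  have hxA : xᴴ ∈ A := centralizer_star hS hx
  obtain ⟨heA, he1, he2⟩ := he
  obtain ⟨hfA, hf1, hf2⟩ := hf
  set y := e * x * f with hy
  have hyA : y ∈ A := A.mul_mem (A.mul_mem heA hx) hfA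
  have hyh : yᴴ = f * xᴴ * e := by simp [hy, he1, hf1, mul_assoc]
  obtain ⟨c, hc⟩ := hes (x * f * xᴴ) (A.mul_mem (A.mul_mem hx hfA) hxA)
  obtain ⟨d, hd⟩ := hfs (xᴴ * e * x) (A.mul_mem (A.mul_mem hxA heA) hx)
  have hc' : y * yᴴ = c • e := by
    rw [← hc, hyh, hy]; simp only [mul_assoc]; rw [← mul_assoc f f, hf2]
  have hd' : yᴴ * y = d • f := by
    rw [← hd, hyh, hy]; simp only [mul_assoc]; rw [← mul_assoc e e, he2]
  have hey : e * y = y := by rw [hy, ← mul_assoc, ← mul_assoc, he2]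
  have hyf : y * f = y := by rw [hy, mul_assoc, hf2]
  have hcd : c = d := by
    have h1 : y * yᴴ * y = c • y := by rw [hc', smul_mul_assoc, hey]
    have h2 : y * yᴴ * y = d • y := by rw [mul_assoc, hd', mul_smul_comm, hyf]
    have h3 : (c - d) • y = 0 := by rw [sub_smul, ← h1, ← h2, sub_self]
    exact sub_eq_zero.1 ((smul_eq_zero.1 h3).resolve_right hne)
  have hcpos : 0 < c := by
    have hps : (y * yᴴ).PosSemidef := posSemidef_self_mul_conjTranspose y
    have hpe : e.PosSemidef := by
      have := posSemidef_self_mul_conjTranspose e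
      rwa [he1, he2] at this
    have hne1 : (y * yᴴ).trace ≠ 0 := fun h => hne (trace_mul_conjTranspose_self_eq_zero_iff.1 h)
    have ht : (y * yᴴ).trace = c * e.trace := by rw [hc', trace_smul, smul_eq_mul]
    have hne2 : e.trace ≠ 0 := fun h => hne1 (by rw [ht, h, mul_zero])
    have p1 : 0 < (y * yᴴ).trace := lt_of_le_of_ne hps.trace_nonneg hne1.symm
    have p2 : 0 < e.trace := lt_of_le_of_ne hpe.trace_nonneg hne2.symm
    rw [eq_div_of_mul_eq hne2 ht.symm]
    exact div_pos p1 p2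
  obtain ⟨r, hr, rfl⟩ : ∃ r : ℝ, 0 < r ∧ (r : ℂ) = c := by
    rw [Complex.lt_def] at hcpos
    exact ⟨c.re, hcpos.1, Complex.ext rfl hcpos.2⟩
  have hs : ((√r : ℝ) : ℂ)⁻¹ * (((√r : ℝ) : ℂ)⁻¹ * (r : ℂ)) = 1 := by
    have h0 : ((√r : ℝ) : ℂ) ≠ 0 := by exact_mod_cast (Real.sqrt_pos.2 hr).ne'
    have h1 : (r : ℂ) = ((√r : ℝ) : ℂ) * ((√r : ℝ) : ℂ) := by
      rw [← Complex.ofReal_mul, Real.mul_self_sqrt hr.le]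
    rw [h1]; field_simp
  have hst : star (((√r : ℝ) : ℂ)⁻¹) = ((√r : ℝ) : ℂ)⁻¹ := by
    rw [star_inv₀]; congr 1; exact Complex.conj_ofReal _
  refine ⟨((√r : ℝ) : ℂ)⁻¹ • y, A.smul_mem hyA _, ?_, ?_⟩
  · rw [conjTranspose_smul, hst, smul_mul_assoc, mul_smul_comm, hc', smul_smul, smul_smul, mul_assoc,
      hs, one_smul]
  · rw [conjTranspose_smul, hst, smul_mul_assoc, mul_smul_comm, hd', ← hcd, smul_smul, smul_smul,
      mul_assoc, hs, one_smul]

lemma pisom_mul {u e : Matrix ι ι ℂ} (h : uᴴ * u = e) (he : eᴴ = e) (hee : e * e = e) :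
    u * e = u := by
  have : (u - u * e)ᴴ * (u - u * e) = 0 := by
    rw [conjTranspose_sub, conjTranspose_mul, he, sub_mul, mul_sub, mul_sub, h, ← mul_assoc, h,
      mul_assoc e, h, mul_assoc e uᴴ, ← mul_assoc uᴴ u, h, hee, hee]
    simp
  rw [conjTranspose_mul_self_eq_zero] at this
  exact (sub_eq_zero.1 this).symm

open Classical in
lemma exists_units {S : Set (Matrix ι ι ℂ)} (hS : ∀ s ∈ S, sᴴ ∈ S) :
    ∃ (b : ℕ) (dA : Fin b → ℕ) (u : ∀ l, Fin (dA l) → Matrix ι ι ℂ) (ep : Fin b → Matrix ι ι ℂ),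
      (∀ l, IsPr (Subalgebra.centralizer ℂ S) (ep l) ∧ ep l ≠ 0 ∧
        IsScal (Subalgebra.centralizer ℂ S) (ep l)) ∧
      (∀ l, 0 < dA l) ∧ (∀ l a, u l a ∈ Subalgebra.centralizer ℂ S) ∧
      (∀ l a, (u l a)ᴴ * u l a = ep l) ∧
      (∀ l a a', a ≠ a' → (u l a)ᴴ * u l a' = 0) ∧
      (∀ l l' a a', l ≠ l' → ∀ x ∈ Subalgebra.centralizer ℂ S, (u l a)ᴴ * x * u l' a' = 0) ∧
      ∑ l, ∑ a, u l a * (u l a)ᴴ = 1 := by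
  set A := Subalgebra.centralizer ℂ S with hA
  obtain ⟨n, P, hP1, hP2, hP3⟩ := exists_decomp hS _ 1
    ⟨Subalgebra.one_mem _, by simp, by simp⟩ rfl
  let R : Fin n → Fin n → Prop := fun i j => ∃ u ∈ A, u * uᴴ = P i ∧ uᴴ * u = P j
  have hRm : ∀ u i j, u * uᴴ = P i → uᴴ * u = P j → P i * u = u ∧ u * P j = u := by
    intro u i j h1 h2
    have h3 := pisom_mul h2 (hP1 j).1.2.1 (hP1 j).1.2.2
    refine ⟨?_, h3⟩
    rw [← h1, mul_assoc, h2, h3]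
  let s : Setoid (Fin n) :=
    { r := R
      iseqv :=
        { refl := fun i => ⟨P i, (hP1 i).1.1, by rw [(hP1 i).1.2.1, (hP1 i).1.2.2],
            by rw [(hP1 i).1.2.1, (hP1 i).1.2.2]⟩
          symm := by
            rintro i j ⟨u, hu, h1, h2⟩
            exact ⟨uᴴ, centralizer_star hS hu, by simpa using h2, by simpa using h1⟩
          trans := by
            rintro i j k ⟨u, hu, h1, h2⟩ ⟨v, hv, h3, h4⟩
            have a1 := (hRm u i j h1 h2).2
            have a2 := (hRm v j k h3 h4).1
            refine ⟨u * v, A.mul_mem hu hv, ?_, ?_⟩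
            · rw [conjTranspose_mul, mul_assoc, ← mul_assoc v, h3, ← mul_assoc, a1, h1]
            · rw [conjTranspose_mul, mul_assoc, ← mul_assoc uᴴ, h2, a2, h4] } }
  let g : Fin (Fintype.card (Quotient s)) ≃ Quotient s := (Fintype.equivFin _).symm
  let cl : Fin (Fintype.card (Quotient s)) → Type := fun l => {i : Fin n // (⟦i⟧ : Quotient s) = g l}
  let h : ∀ l, Fin (Fintype.card (cl l)) ≃ cl l := fun l => (Fintype.equivFin _).symm
  let rep : Fin (Fintype.card (Quotient s)) → Fin n := fun l => (g l).out
  have hrep : ∀ l, (⟦rep l⟧ : Quotient s) = g l := fun l => Quotient.out_eq _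
  have hR : ∀ l (a : Fin (Fintype.card (cl l))), R (h l a).1 (rep l) := by
    intro l a
    have : (⟦(h l a).1⟧ : Quotient s) = ⟦rep l⟧ := by rw [hrep, (h l a).2]
    exact Quotient.exact this
  choose u hu1 hu2 hu3 using hR
  have hum := fun l a => hRm _ _ _ (hu2 l a) (hu3 l a)
  have hul : ∀ l a, (u l a)ᴴ * P (h l a).1 = (u l a)ᴴ := by
    intro l a
    have := congrArg conjTranspose (hum l a).1
    rwa [conjTranspose_mul, (hP1 _).1.2.1] at this
  refine ⟨_, fun l => Fintype.card (cl l), u, fun l => P (rep l), fun l => hP1 _, ?_, hu1, hu3,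
    ?_, ?_, ?_⟩
  · intro l
    exact Fintype.card_pos_iff.2 ⟨⟨rep l, hrep l⟩⟩
  · intro l a a' haa
    rw [← hul, ← (hum l a').1, mul_assoc, ← mul_assoc (P _) (P _), hP2, zero_mul, mul_zero]
    intro heq
    exact haa ((h l).injective (Subtype.ext heq))
  · intro l l' a a' hll x hx
    rw [← hul, ← (hum l' a').1]
    have : P (h l a).1 * x * P (h l' a').1 = 0 := by
      by_contra hne
      have hRR : R (h l a).1 (h l' a').1 :=
        exists_pisom hS (hP1 _).1 (hP1 _).1 (hP1 _).2.2 (hP1 _).2.2 hx hne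
      have : (⟦(h l a).1⟧ : Quotient s) = ⟦(h l' a').1⟧ := Quotient.sound hRR
      rw [(h l a).2, (h l' a').2] at this
      exact hll (g.injective this)
    have h2 : (u l a)ᴴ * P (h l a).1 * x * (P (h l' a').1 * u l' a') =
      (u l a)ᴴ * (P (h l a).1 * x * P (h l' a').1) * u l' a' := by simp only [mul_assoc]
    rw [h2, this, mul_zero, zero_mul]
  · simp only [hu2]
    rw [← hP3]
    have h1 : ∀ l, ∑ a, P (h l a).1 = ∑ x : cl l, P x.1 := fun l =>
      Equiv.sum_comp (h l) (fun x : cl l => P x.1)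
    simp only [h1]
    rw [Equiv.sum_comp g (fun q : Quotient s => ∑ x : {i : Fin n // (⟦i⟧ : Quotient s) = q}, P x.1)]
    exact Fintype.sum_fiberwise (fun i => (⟦i⟧ : Quotient s)) P

lemma structure_thm {S : Set (Matrix ι ι ℂ)} (hS : ∀ s ∈ S, sᴴ ∈ S) :
    ∃ (b : ℕ) (dA dB : Fin b → ℕ)
      (W : Matrix ι (Σ l : Fin b, Fin (dA l) × Fin (dB l)) ℂ),
      Wᴴ * W = 1 ∧ W * Wᴴ = 1 ∧ (∀ l, 0 < dA l) ∧ (∀ l, 0 < dB l) ∧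
      ∀ X, X ∈ Subalgebra.centralizer ℂ S ↔
        ∃ A : ∀ l, Matrix (Fin (dA l)) (Fin (dA l)) ℂ,
          X = W * (Matrix.blockDiagonal' fun l =>
              Matrix.kroneckerMap (· * ·) (A l) (1 : Matrix (Fin (dB l)) (Fin (dB l)) ℂ)) * Wᴴ := by
  obtain ⟨b, dA, u, ep, h1, h2, h3, h4, h5, h6, h7⟩ := exists_units hS
  have hum := fun l a => pisom_mul (h4 l a) (h1 l).1.2.1 (h1 l).1.2.2
  choose dB F hF1 hF2 using fun l => proj_factor (ep l) (h1 l).1.2.1 (h1 l).1.2.2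
  let W : Matrix ι (Σ l : Fin b, Fin (dA l) × Fin (dB l)) ℂ :=
    Matrix.of fun x s => (u s.1 s.2.1 * F s.1) x s.2.2
  have hWX : ∀ (X : Matrix ι ι ℂ) s t, (Wᴴ * X * W) s t =
      ((F s.1)ᴴ * ((u s.1 s.2.1)ᴴ * X * u t.1 t.2.1) * F t.1) s.2.2 t.2.2 := by
    intro X s t
    have : (F s.1)ᴴ * ((u s.1 s.2.1)ᴴ * X * u t.1 t.2.1) * F t.1 =
        (u s.1 s.2.1 * F s.1)ᴴ * X * (u t.1 t.2.1 * F t.1) := by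
      simp only [conjTranspose_mul, Matrix.mul_assoc]
    rw [this]
    rfl
  have hFeF : ∀ l, (F l)ᴴ * ep l * F l = 1 := by
    intro l
    rw [← hF2, Matrix.mul_assoc, Matrix.mul_assoc, hF1, Matrix.mul_one, hF1]
  have hWW : Wᴴ * W = 1 := by
    ext ⟨l, a, i⟩ ⟨l', a', i'⟩
    have := hWX 1 ⟨l, a, i⟩ ⟨l', a', i'⟩
    rw [Matrix.mul_one] at this
    rw [this]
    by_cases hl : l = l'
    · subst hl
      by_cases ha : a = a'
      · subst ha
        simp only [mul_one]
        rw [h4, hFeF]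
        by_cases hi : i = i'
        · subst hi; simp
        · simp [hi, one_apply]
      · simp only [mul_one]
        rw [h5 _ _ _ ha]
        simp [one_apply, ha]
    · simp only
      rw [h6 _ _ _ _ hl 1 (Subalgebra.one_mem _)]
      simp [one_apply, hl]
  have hWW' : W * Wᴴ = 1 := by
    rw [← h7]
    ext x y
    rw [mul_apply, Fintype.sum_sigma, Matrix.sum_apply]
    refine Finset.sum_congr rfl fun l _ => ?_
    rw [Fintype.sum_prod_type, Matrix.sum_apply]
    refine Finset.sum_congr rfl fun a _ => ?_
    have : u l a * (u l a)ᴴ = (u l a * F l) * (u l a * F l)ᴴ := by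
      rw [conjTranspose_mul, Matrix.mul_assoc, ← Matrix.mul_assoc (F l), hF2, ← Matrix.mul_assoc,
        hum]
    rw [this]
    rfl
  refine ⟨b, dA, dB, W, hWW, hWW', h2, ?_, ?_⟩
  · intro l
    rcases Nat.eq_zero_or_pos (dB l) with h | h
    · exfalso
      apply (h1 l).2.1
      rw [← hF2]
      ext x y
      rw [mul_apply]
      have : IsEmpty (Fin (dB l)) := by rw [h]; infer_instance
      simp
    · exact h
  · intro X
    constructor
    · intro hX
      have hsc : ∀ l a a', ∃ c : ℂ, (u l a)ᴴ * X * u l a' = c • ep l := by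
        intro l a a'
        obtain ⟨c, hc⟩ := (h1 l).2.2 ((u l a)ᴴ * X * u l a')
          (Subalgebra.mul_mem _ (Subalgebra.mul_mem _ (centralizer_star hS (h3 l a)) hX) (h3 l a'))
        refine ⟨c, ?_⟩
        rw [← hc]
        have e1 := congrArg conjTranspose (hum l a)
        rw [conjTranspose_mul, (h1 l).1.2.1] at e1
        calc _ = (ep l * (u l a)ᴴ) * X * (u l a' * ep l) := by rw [e1, hum]
          _ = _ := by simp only [mul_assoc]
      choose c hc using hsc
      refine ⟨fun l => Matrix.of fun a a' => c l a a', ?_⟩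
      have : Wᴴ * X * W = blockDiagonal' fun l =>
          kroneckerMap (· * ·) (Matrix.of fun a a' => c l a a')
            (1 : Matrix (Fin (dB l)) (Fin (dB l)) ℂ) := by
        ext ⟨l, a, i⟩ ⟨l', a', i'⟩
        rw [hWX]
        by_cases hl : l = l'
        · subst hl
          simp only
          rw [hc, blockDiagonal'_apply_eq, Matrix.mul_smul, Matrix.smul_mul, hFeF]
          simp
        · simp only
          rw [h6 _ _ _ _ hl X hX, blockDiagonal'_apply_ne _ _ _ hl]
          simp
      rw [← this, Matrix.mul_assoc, Matrix.mul_assoc, Matrix.mul_assoc, hWW', Matrix.mul_one,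
        ← Matrix.mul_assoc, hWW', Matrix.one_mul]
    · rintro ⟨A, rfl⟩
      set Y : Matrix ι ι ℂ := ∑ l, ∑ a, ∑ a', A l a a' • (u l a * (u l a')ᴴ) with hY
      have hYA : Y ∈ Subalgebra.centralizer ℂ S :=
        Subalgebra.sum_mem _ fun l _ => Subalgebra.sum_mem _ fun a _ =>
          Subalgebra.sum_mem _ fun a' _ => Subalgebra.smul_mem _
            (Subalgebra.mul_mem _ (h3 l a) (centralizer_star hS (h3 l a'))) _
      have hYu : ∀ l a', Y * u l a' = ∑ a, A l a a' • u l a := by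
        intro l a'
        rw [hY, Finset.sum_mul, Finset.sum_eq_single l]
        · rw [Finset.sum_mul]
          refine Finset.sum_congr rfl fun a _ => ?_
          rw [Finset.sum_mul, Finset.sum_eq_single a']
          · rw [smul_mul_assoc, mul_assoc, h4, hum]
          · intro a'' _ ha
            rw [smul_mul_assoc, mul_assoc, h5 _ _ _ ha, mul_zero, smul_zero]
          · simp
        · intro l' _ hl
          rw [Finset.sum_mul]
          refine Finset.sum_eq_zero fun a _ => ?_
          rw [Finset.sum_mul]
          refine Finset.sum_eq_zero fun a'' _ => ?_
          have := h6 l' l a'' a' hl 1 (Subalgebra.one_mem _)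
          rw [mul_one] at this
          rw [smul_mul_assoc, mul_assoc, this, mul_zero, smul_zero]
        · simp
      have huYu : ∀ l a a', (u l a)ᴴ * Y * u l a' = A l a a' • ep l := by
        intro l a a'
        rw [mul_assoc, hYu, Finset.mul_sum, Finset.sum_eq_single a]
        · rw [mul_smul_comm, h4]
        · intro a'' _ ha
          rw [mul_smul_comm, h5 _ _ _ ha.symm, smul_zero]
        · simp
      have : Wᴴ * Y * W = blockDiagonal' fun l =>
          kroneckerMap (· * ·) (A l)
            (1 : Matrix (Fin (dB l)) (Fin (dB l)) ℂ) := by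
        ext ⟨l, a, i⟩ ⟨l', a', i'⟩
        rw [hWX]
        by_cases hl : l = l'
        · subst hl
          simp only
          rw [huYu, blockDiagonal'_apply_eq, Matrix.mul_smul, Matrix.smul_mul, hFeF]
          simp
        · simp only
          rw [h6 _ _ _ _ hl Y hYA, blockDiagonal'_apply_ne _ _ _ hl]
          simp
      rw [← this]
      have e2 : W * (Wᴴ * Y * W) * Wᴴ = Y := by
        rw [Matrix.mul_assoc, Matrix.mul_assoc, Matrix.mul_assoc, hWW', Matrix.mul_one,
          ← Matrix.mul_assoc, hWW', Matrix.one_mul]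
      rw [e2]
      exact hYA

lemma msqrt_spec {ρ : Matrix ι ι ℂ} (hρ : ρ.PosDef) :
    (msqrt ρ).PosDef ∧ msqrt ρ * msqrt ρ = ρ := by
  have hex : ∃ B : Matrix ι ι ℂ, B.PosSemidef ∧ B * B = ρ := by
    obtain ⟨U, l, h1, h2, h3, h4⟩ := spec_form ρ hρ.1
    have hl : ∀ i, 0 ≤ l i := by
      intro i; rw [h4]; exact hρ.posSemidef.eigenvalues_nonneg i
    refine ⟨U * diagonal (fun i => ((√(l i) : ℝ) : ℂ)) * Uᴴ, ?_, ?_⟩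
    · apply PosSemidef.mul_mul_conjTranspose_same
      apply PosSemidef.diagonal
      intro i
      simp only [Pi.zero_apply]
      exact_mod_cast Real.sqrt_nonneg _
    · conv_rhs => rw [h3]
      simp only [Matrix.mul_assoc]
      rw [← Matrix.mul_assoc Uᴴ U, h1, Matrix.one_mul, ← Matrix.mul_assoc (diagonal _) (diagonal _),
        diagonal_mul_diagonal]
      congr 3
      ext i
      rw [← Complex.ofReal_mul, Real.mul_self_sqrt (hl i)]
  have hm : msqrt ρ = hex.choose := by rw [msqrt, dif_pos hex]
  have hsp := hex.choose_spec
  rw [← hm] at hsp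
  refine ⟨hsp.1.posDef_iff_isUnit.2 ?_, hsp.2⟩
  have hu : IsUnit ρ := hρ.isUnit
  rw [Matrix.isUnit_iff_isUnit_det] at hu ⊢
  rw [← hsp.2, det_mul] at hu
  exact isUnit_of_mul_isUnit_left hu

lemma sqrt_modular {h : Matrix ι ι ℂ} (hh : h.PosDef) (N : Submodule ℂ (Matrix ι ι ℂ))
    (hN : ∀ X ∈ N, h * h * X * (h⁻¹ * h⁻¹) ∈ N) : ∀ X ∈ N, h * X * h⁻¹ ∈ N := by
  obtain ⟨U, l, h1, h2, h3, h4⟩ := spec_form h hh.1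
  have hl : ∀ i, 0 < l i := by
    intro i; rw [h4]; exact hh.eigenvalues_pos i
  have hinv : h⁻¹ = U * diagonal (fun i => (l i : ℂ)⁻¹) * Uᴴ := by
    apply inv_eq_right_inv
    rw [h3]
    simp only [Matrix.mul_assoc]
    rw [← Matrix.mul_assoc Uᴴ U, h1, Matrix.one_mul, ← Matrix.mul_assoc (diagonal _) (diagonal _),
        diagonal_mul_diagonal]
    have : (fun i => (l i : ℂ) * (l i : ℂ)⁻¹) = fun _ => 1 := by
      ext i; exact mul_inv_cancel₀ (by exact_mod_cast (hl i).ne')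
    rw [this, diagonal_one, Matrix.one_mul, h2]
  have hdelta : ∀ (Z : Matrix ι ι ℂ) (i j : ι), (Uᴴ * (h * Z * h⁻¹) * U) i j =
      ((l i : ℂ) / l j) * (Uᴴ * Z * U) i j := by
    intro Z i j
    have : Uᴴ * (h * Z * h⁻¹) * U = diagonal (fun i => (l i : ℂ)) * (Uᴴ * Z * U) *
        diagonal (fun i => (l i : ℂ)⁻¹) := by
      rw [hinv]
      conv_lhs => rw [h3]
      simp only [Matrix.mul_assoc, h1, Matrix.mul_one]
      rw [← Matrix.mul_assoc Uᴴ U, h1, Matrix.one_mul]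
    rw [this, mul_diagonal, diagonal_mul]
    ring
  let Δ : Module.End ℂ (Matrix ι ι ℂ) :=
    LinearMap.mulLeft ℂ (h * h) * LinearMap.mulRight ℂ (h⁻¹ * h⁻¹)
  have hΔ : ∀ Z, Δ Z = h * h * Z * (h⁻¹ * h⁻¹) := by
    intro Z
    change h * h * (Z * (h⁻¹ * h⁻¹)) = _
    simp only [mul_assoc]
  have hΔe : ∀ Z i j, (Uᴴ * (Δ Z) * U) i j = ((l i : ℂ) / l j) ^ 2 * (Uᴴ * Z * U) i j := by
    intro Z i j
    have : Δ Z = h * (h * Z * h⁻¹) * h⁻¹ := by rw [hΔ]; simp only [mul_assoc]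
    rw [this, hdelta, hdelta]; ring
  have hpow : ∀ (n : ℕ) X, (X ∈ N → (Δ ^ n) X ∈ N) ∧
      ∀ i j, (Uᴴ * ((Δ ^ n) X) * U) i j = (((l i : ℂ) / l j) ^ 2) ^ n * (Uᴴ * X * U) i j := by
    intro n
    induction n with
    | zero => intro X; simp
    | succ n ih =>
      intro X
      rw [pow_succ']
      constructor
      · intro hX
        rw [Module.End.mul_apply, hΔ]
        exact hN _ ((ih X).1 hX)
      · intro i j
        rw [Module.End.mul_apply, hΔe, (ih X).2]; ring
  have hpoly : ∀ (p : Polynomial ℂ) X, (X ∈ N → (Polynomial.aeval Δ p) X ∈ N) ∧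
      ∀ i j, (Uᴴ * ((Polynomial.aeval Δ p) X) * U) i j =
        p.eval (((l i : ℂ) / l j) ^ 2) * (Uᴴ * X * U) i j := by
    intro p X
    induction p using Polynomial.induction_on' with
    | add p q hp hq =>
      constructor
      · intro hX
        rw [map_add, LinearMap.add_apply]
        exact N.add_mem (hp.1 hX) (hq.1 hX)
      · intro i j
        rw [map_add, LinearMap.add_apply, mul_add, add_mul, Matrix.add_apply, hp.2, hq.2,
          Polynomial.eval_add, add_mul]
    | monomial n a =>
      rw [Polynomial.aeval_monomial]
      have : (algebraMap ℂ (Module.End ℂ (Matrix ι ι ℂ)) a * Δ ^ n) X = a • (Δ ^ n) X := by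
        rw [Module.End.mul_apply, Module.algebraMap_end_apply]
      rw [this]
      constructor
      · intro hX
        exact N.smul_mem _ ((hpow n X).1 hX)
      · intro i j
        rw [mul_smul_comm, smul_mul_assoc, Matrix.smul_apply, (hpow n X).2, Polynomial.eval_monomial,
          smul_eq_mul]
        ring
  intro X hX
  let s : Finset ℂ := (Finset.univ : Finset (ι × ι)).image fun ij => ((l ij.1 : ℂ) / l ij.2) ^ 2
  let r : ℂ → ℂ := fun z => ((√ z.re : ℝ) : ℂ)
  let p := Lagrange.interpolate s id r
  have hp : ∀ i j, p.eval (((l i : ℂ) / l j) ^ 2) = (l i : ℂ) / l j := by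
    intro i j
    have hmem : ((l i : ℂ) / l j) ^ 2 ∈ s := by
      apply Finset.mem_image.2
      exact ⟨(i, j), Finset.mem_univ _, rfl⟩
    have := Lagrange.eval_interpolate_at_node (s := s) (v := id) r (Set.injOn_id _) hmem
    simp only [id] at this
    rw [this]
    have e1 : ((l i : ℂ) / l j) ^ 2 = (((l i / l j) ^ 2 : ℝ) : ℂ) := by push_cast; rfl
    simp only [r]
    rw [e1, Complex.ofReal_re, Real.sqrt_sq (div_pos (hl i) (hl j)).le]
    push_cast; rfl
  have key : (Polynomial.aeval Δ p) X = h * X * h⁻¹ := by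
    have e2 : Uᴴ * ((Polynomial.aeval Δ p) X) * U = Uᴴ * (h * X * h⁻¹) * U := by
      ext i j
      rw [(hpoly p X).2, hdelta, hp]
    have e3 : ∀ Z : Matrix ι ι ℂ, U * (Uᴴ * Z * U) * Uᴴ = Z := by
      intro Z
      rw [Matrix.mul_assoc, Matrix.mul_assoc, Matrix.mul_assoc, h2, Matrix.mul_one,
        ← Matrix.mul_assoc, h2, Matrix.one_mul]
    rw [← e3 ((Polynomial.aeval Δ p) X), e2, e3]
  rw [← key]
  exact (hpoly p X).1 hX

lemma finrank_ker_le (L Ld : Matrix ι ι ℂ →ₗ[ℂ] Matrix ι ι ℂ)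
    (h : ∀ X Y, (Ld X * Y).trace = (X * L Y).trace) :
    Module.finrank ℂ (LinearMap.ker L) ≤ Module.finrank ℂ (LinearMap.ker Ld) := by
  let Φ : Matrix ι ι ℂ →ₗ[ℂ] Module.Dual ℂ (Matrix ι ι ℂ) :=
    LinearMap.mk₂ ℂ (fun X Y => (X * Y).trace) (by intros; simp [add_mul]) (by intros; simp)
      (by intros; simp [mul_add]) (by intros; simp)
  have hΦ : Function.Injective Φ := by
    intro X Y hXY
    rw [ext_iff_trace_mul_right]
    intro Z
    exact LinearMap.congr_fun hXY Z
  have hle : (LinearMap.range Ld).map Φ ≤ LinearMap.range L.dualMap := by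
    rintro _ ⟨_, ⟨X, rfl⟩, rfl⟩
    refine ⟨Φ X, ?_⟩
    ext1 Y
    exact (h X Y).symm
  have h1 := Submodule.finrank_mono hle
  rw [← (Submodule.equivMapOfInjective Φ hΦ (LinearMap.range Ld)).finrank_eq,
    LinearMap.finrank_range_dualMap_eq_finrank_range] at h1
  have h2 := LinearMap.finrank_range_add_finrank_ker L
  have h3 := LinearMap.finrank_range_add_finrank_ker Ld
  omega

lemma map_eq_of_finrank (N K : Submodule ℂ (Matrix ι ι ℂ))
    (hNK : Module.finrank ℂ K ≤ Module.finrank ℂ N) (f : Matrix ι ι ℂ →ₗ[ℂ] Matrix ι ι ℂ)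
    (hf : Function.Injective f) (hm : ∀ X ∈ N, f X ∈ K) (Y : Matrix ι ι ℂ) :
    Y ∈ K ↔ ∃ X ∈ N, Y = f X := by
  have : N.map f = K := by
    apply Submodule.eq_of_le_of_finrank_le
    · rintro _ ⟨X, hX, rfl⟩; exact hm X hX
    · rwa [← (Submodule.equivMapOfInjective f hf N).finrank_eq]
  rw [← this, Submodule.mem_map]
  constructor
  · rintro ⟨X, hX, rfl⟩; exact ⟨X, hX, rfl⟩
  · rintro ⟨X, hX, rfl⟩; exact ⟨X, hX, rfl⟩

end Helpers

section Rho

variable {b : ℕ} {dA dB : Fin b → ℕ}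

/-- `⊕ A_l ⊗ 1`. -/
noncomputable def hat (dB : Fin b → ℕ) (A : ∀ l, Matrix (Fin (dA l)) (Fin (dA l)) ℂ) :
    Matrix (Σ l : Fin b, Fin (dA l) × Fin (dB l)) (Σ l : Fin b, Fin (dA l) × Fin (dB l)) ℂ :=
  Matrix.blockDiagonal' fun l =>
    Matrix.kroneckerMap (· * ·) (A l) (1 : Matrix (Fin (dB l)) (Fin (dB l)) ℂ)

lemma hat_mul (A B : ∀ l, Matrix (Fin (dA l)) (Fin (dA l)) ℂ) :
    hat dB A * hat dB B = hat dB (fun l => A l * B l) := by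
  rw [hat, hat, hat, ← blockDiagonal'_mul]
  congr 1
  funext l
  have := mul_kronecker_mul (A l) (B l) (1 : Matrix (Fin (dB l)) (Fin (dB l)) ℂ)
    (1 : Matrix (Fin (dB l)) (Fin (dB l)) ℂ)
  rw [Matrix.one_mul] at this
  exact this.symm

lemma hat_one : hat dB (fun l => (1 : Matrix (Fin (dA l)) (Fin (dA l)) ℂ)) = 1 := by
  rw [hat]
  have : (fun l => kroneckerMap (· * ·) (1 : Matrix (Fin (dA l)) (Fin (dA l)) ℂ)
    (1 : Matrix (Fin (dB l)) (Fin (dB l)) ℂ)) = fun l => 1 := by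
    funext l; exact one_kronecker_one
  rw [this]
  exact blockDiagonal'_one

lemma hat_mul_apply (A : ∀ l, Matrix (Fin (dA l)) (Fin (dA l)) ℂ)
    (M : Matrix (Σ l : Fin b, Fin (dA l) × Fin (dB l)) (Σ l : Fin b, Fin (dA l) × Fin (dB l)) ℂ)
    (l i c t) : (hat dB A * M) ⟨l, i, c⟩ t = ∑ k, A l i k * M ⟨l, k, c⟩ t := by
  rw [mul_apply, Fintype.sum_sigma, Finset.sum_eq_single l]
  · rw [Fintype.sum_prod_type]
    refine Finset.sum_congr rfl fun k _ => ?_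
    rw [Finset.sum_eq_single c]
    · simp [hat, blockDiagonal'_apply_eq]
    · intro c' _ hc
      simp [hat, blockDiagonal'_apply_eq, one_apply, hc.symm]
    · simp
  · intro l' _ hl
    refine Finset.sum_eq_zero fun x _ => ?_
    rw [hat, blockDiagonal'_apply_ne _ _ _ hl.symm, zero_mul]
  · simp

lemma mul_hat_apply (A : ∀ l, Matrix (Fin (dA l)) (Fin (dA l)) ℂ)
    (M : Matrix (Σ l : Fin b, Fin (dA l) × Fin (dB l)) (Σ l : Fin b, Fin (dA l) × Fin (dB l)) ℂ)
    (l i c t) : (M * hat dB A) t ⟨l, i, c⟩ = ∑ k, M t ⟨l, k, c⟩ * A l k i := by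
  rw [mul_apply, Fintype.sum_sigma, Finset.sum_eq_single l]
  · rw [Fintype.sum_prod_type]
    refine Finset.sum_congr rfl fun k _ => ?_
    rw [Finset.sum_eq_single c]
    · simp [hat, blockDiagonal'_apply_eq]
    · intro c' _ hc
      simp [hat, blockDiagonal'_apply_eq, one_apply, hc]
    · simp
  · intro l' _ hl
    refine Finset.sum_eq_zero fun x _ => ?_
    rw [hat, blockDiagonal'_apply_ne _ _ _ hl, mul_zero]
  · simp

lemma comm_hat (hA : ∀ l, 0 < dA l)
    (C : Matrix (Σ l : Fin b, Fin (dA l) × Fin (dB l)) (Σ l : Fin b, Fin (dA l) × Fin (dB l)) ℂ)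
    (hC : ∀ A : ∀ l, Matrix (Fin (dA l)) (Fin (dA l)) ℂ, C * hat dB A = hat dB A * C) :
    ∃ c : ∀ l, Matrix (Fin (dB l)) (Fin (dB l)) ℂ, ∀ l i x l' i' x',
      C ⟨l, i, x⟩ ⟨l', i', x'⟩ = if h : l = l' then
        (if h ▸ i = i' then c l' (h ▸ x) x' else 0) else 0 := by
  refine ⟨fun l => Matrix.of fun x y => C ⟨l, ⟨0, hA l⟩, x⟩ ⟨l, ⟨0, hA l⟩, y⟩, ?_⟩
  intro l i x l' i' x'
  by_cases h : l = l'
  · subst h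
    simp only [dite_true]
    have h1 := congrFun (congrFun (hC (Function.update 0 l (Matrix.single ⟨0, hA l⟩ i 1)))
      ⟨l, ⟨0, hA l⟩, x⟩) ⟨l, i', x'⟩
    rw [hat_mul_apply, mul_hat_apply] at h1
    simp only [Function.update_self, Matrix.single_apply] at h1
    by_cases hi : i = i'
    · subst hi
      simpa [eq_comm] using h1.symm
    · simpa [hi, eq_comm] using h1.symm
  · rw [dif_neg h]
    have h1 := congrFun (congrFun (hC (Function.update 0 l 1)) ⟨l, i, x⟩) ⟨l', i', x'⟩
    rw [hat_mul_apply, mul_hat_apply] at h1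
    rw [Function.update_self, Function.update_of_ne (Ne.symm h)] at h1
    simpa [one_apply] using h1.symm

lemma rho_structure (hA : ∀ l, 0 < dA l) (hB : ∀ l, 0 < dB l)
    (M : Matrix (Σ l : Fin b, Fin (dA l) × Fin (dB l)) (Σ l : Fin b, Fin (dA l) × Fin (dB l)) ℂ)
    (hM : M.PosDef)
    (hn : ∀ A : ∀ l, Matrix (Fin (dA l)) (Fin (dA l)) ℂ, ∃ A' : ∀ l, Matrix (Fin (dA l)) (Fin (dA l)) ℂ,
      M * hat dB A = hat dB A' * M) :
    ∃ (p : Fin b → ℝ) (ρA : ∀ l, Matrix (Fin (dA l)) (Fin (dA l)) ℂ)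
          (τB : ∀ l, Matrix (Fin (dB l)) (Fin (dB l)) ℂ),
          (∀ l, 0 < p l) ∧
          (∀ l, (ρA l).PosDef ∧ (ρA l).trace = 1) ∧
          (∀ l, (τB l).PosDef ∧ (τB l).trace = 1) ∧
          M = Matrix.blockDiagonal' fun l => (p l : ℂ) •
            Matrix.kroneckerMap (· * ·) (ρA l) (τB l) := by
  have neA : ∀ l, Nonempty (Fin (dA l)) := fun l => ⟨⟨0, hA l⟩⟩
  have neB : ∀ l, Nonempty (Fin (dB l)) := fun l => ⟨⟨0, hB l⟩⟩
  set a : ∀ l, Matrix (Fin (dA l)) (Fin (dA l)) ℂ := fun l =>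
    ∑ x : Fin (dB l), M.submatrix (fun i => ⟨l, i, x⟩) (fun i => ⟨l, i, x⟩) with ha
  have haa : ∀ l i j, a l i j = ∑ x, M ⟨l, i, x⟩ ⟨l, j, x⟩ := by
    intro l i j; simp [ha, Matrix.sum_apply]
  have hap : ∀ l, (a l).PosDef := by
    intro l
    apply posDef_sum Finset.univ_nonempty
    intro x _
    apply hM.submatrix
    intro i j hij
    simpa using hij
  have hau : ∀ l, IsUnit (a l).det := fun l => (Matrix.isUnit_iff_isUnit_det _).1 (hap l).isUnit
  set C := hat dB (fun l => (a l)⁻¹) * M with hCdef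
  have haC : hat dB a * C = M := by
    rw [hCdef, ← Matrix.mul_assoc, hat_mul]
    have : (fun l => a l * (a l)⁻¹) = fun l => 1 := funext fun l => mul_nonsing_inv _ (hau l)
    rw [this, hat_one, Matrix.one_mul]
  have hC : ∀ A : ∀ l, Matrix (Fin (dA l)) (Fin (dA l)) ℂ, C * hat dB A = hat dB A * C := by
    intro A
    obtain ⟨A', h'⟩ := hn A
    have key : ∀ l, a l * A l = A' l * a l := by
      intro l
      ext i j
      have : ∀ x, (M * hat dB A) ⟨l, i, x⟩ ⟨l, j, x⟩ = (hat dB A' * M) ⟨l, i, x⟩ ⟨l, j, x⟩ := by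
        intro x; rw [h']
      simp only [mul_hat_apply, hat_mul_apply] at this
      simp only [mul_apply, haa, Finset.sum_mul, Finset.mul_sum]
      rw [Finset.sum_comm, Finset.sum_congr rfl (fun x _ => this x), Finset.sum_comm]
    rw [hCdef, Matrix.mul_assoc, h', ← Matrix.mul_assoc, ← Matrix.mul_assoc, hat_mul, hat_mul]
    congr 2
    funext l
    calc (a l)⁻¹ * A' l = (a l)⁻¹ * (A' l * a l) * (a l)⁻¹ := by
          rw [Matrix.mul_assoc, Matrix.mul_assoc, mul_nonsing_inv _ (hau l), Matrix.mul_one]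
      _ = A l * (a l)⁻¹ := by
          rw [← key, ← Matrix.mul_assoc, nonsing_inv_mul _ (hau l), Matrix.one_mul]
  obtain ⟨c, hc⟩ := comm_hat hA C hC
  have hMe : ∀ l i x i' x', M ⟨l, i, x⟩ ⟨l, i', x'⟩ = a l i i' * c l x x' := by
    intro l i x i' x'
    rw [← haC, hat_mul_apply, Finset.sum_eq_single i']
    · rw [hc]; simp
    · intro k _ hk
      rw [hc]; simp [hk]
    · simp
  have hM0 : ∀ l i x l' i' x', l ≠ l' → M ⟨l, i, x⟩ ⟨l', i', x'⟩ = 0 := by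
    intro l i x l' i' x' hl
    rw [← haC, hat_mul_apply]
    refine Finset.sum_eq_zero fun k _ => ?_
    rw [hc, dif_neg hl, mul_zero]
  have hdiag : ∀ l, 0 < a l ⟨0, hA l⟩ ⟨0, hA l⟩ := fun l => (hap l).diag_pos
  have hcp : ∀ l, (c l).PosDef := by
    intro l
    have h1 : (M.submatrix (fun x : Fin (dB l) => (⟨l, ⟨0, hA l⟩, x⟩ : Σ l, Fin (dA l) × Fin (dB l)))
        (fun x => ⟨l, ⟨0, hA l⟩, x⟩)).PosDef := by
      apply hM.submatrix
      intro i j hij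
      simpa using hij
    have h2 : c l = (a l ⟨0, hA l⟩ ⟨0, hA l⟩)⁻¹ •
        (M.submatrix (fun x : Fin (dB l) => (⟨l, ⟨0, hA l⟩, x⟩ : Σ l, Fin (dA l) × Fin (dB l)))
        (fun x => ⟨l, ⟨0, hA l⟩, x⟩)) := by
      ext x y
      rw [Matrix.smul_apply, submatrix_apply, hMe, smul_eq_mul, inv_mul_cancel_left₀ (hdiag l).ne']
    rw [h2]
    exact h1.smul (inv_pos.2 (hdiag l))
  have hct : ∀ l, (c l).trace = 1 := by
    intro l
    have h1 := haa l ⟨0, hA l⟩ ⟨0, hA l⟩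
    simp only [hMe, ← Finset.mul_sum] at h1
    have h2 : (c l).trace = ∑ x, c l x x := rfl
    rw [h2]
    exact (mul_eq_left₀ (hdiag l).ne').1 h1.symm
  have htp : ∀ l, 0 < (a l).trace := fun l => (hap l).trace_pos
  have htr : ∀ l, (((a l).trace.re : ℝ) : ℂ) = (a l).trace := by
    intro l
    have := htp l
    rw [Complex.lt_def] at this
    exact Complex.ext rfl this.2
  refine ⟨fun l => (a l).trace.re, fun l => ((a l).trace)⁻¹ • a l, c, ?_, ?_, ?_, ?_⟩
  · intro l
    have := htp l
    rw [Complex.lt_def] at this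
    exact this.1
  · intro l
    refine ⟨(hap l).smul (inv_pos.2 (htp l)), ?_⟩
    rw [trace_smul, smul_eq_mul, inv_mul_cancel₀ (htp l).ne']
  · exact fun l => ⟨hcp l, hct l⟩
  · ext ⟨l, i, x⟩ ⟨l', i', x'⟩
    by_cases hl : l = l'
    · subst hl
      rw [blockDiagonal'_apply_eq, hMe, htr]
      simp only [Matrix.smul_apply, kroneckerMap_apply, smul_eq_mul]
      rw [mul_assoc, mul_inv_cancel_left₀ (htp l).ne']
    · rw [hM0 _ _ _ _ _ _ hl, blockDiagonal'_apply_ne _ _ _ hl]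

end Rho

/-! ### Statement 0 -/

theorem stmt0
    {ι : Type*} [Fintype ι] [DecidableEq ι]
    (L Ld : Matrix ι ι ℂ →ₗ[ℂ] Matrix ι ι ℂ)
    (hL : IsLindblad L) (hLd : IsHSAdjoint L Ld)
    (ρ : Matrix ι ι ℂ) (hρ : ρ.PosDef) (hρtr : ρ.trace = 1) (hρfix : L ρ = 0) :
    ((LinearMap.ker L : Set (Matrix ι ι ℂ)) =
        {X | ∃ Y ∈ LinearMap.ker Ld, X = msqrt ρ * Y * msqrt ρ}) ∧
      ∃ (b : ℕ) (dA dB : Fin b → ℕ)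
        (e : ι ≃ (Σ ℓ : Fin b, Fin (dA ℓ) × Fin (dB ℓ)))
        (U : Matrix ι ι ℂ), U ∈ Matrix.unitaryGroup ι ℂ ∧
        ((LinearMap.ker Ld : Set (Matrix ι ι ℂ)) =
          {X | ∃ A : ∀ ℓ, Matrix (Fin (dA ℓ)) (Fin (dA ℓ)) ℂ,
            X = U * ((Matrix.blockDiagonal' fun ℓ =>
              Matrix.kroneckerMap (· * ·) (A ℓ)
                (1 : Matrix (Fin (dB ℓ)) (Fin (dB ℓ)) ℂ)).submatrix e e) * Uᴴ}) ∧
        ∃ (p : Fin b → ℝ) (ρA : ∀ ℓ, Matrix (Fin (dA ℓ)) (Fin (dA ℓ)) ℂ)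
          (τB : ∀ ℓ, Matrix (Fin (dB ℓ)) (Fin (dB ℓ)) ℂ),
          (∀ ℓ, 0 < p ℓ) ∧
          (∀ ℓ, (ρA ℓ).PosDef ∧ (ρA ℓ).trace = 1) ∧
          (∀ ℓ, (τB ℓ).PosDef ∧ (τB ℓ).trace = 1) ∧
          ρ = U * ((Matrix.blockDiagonal' fun ℓ => (p ℓ : ℂ) •
            Matrix.kroneckerMap (· * ·) (ρA ℓ) (τB ℓ)).submatrix e e) * Uᴴ := by
  obtain ⟨Hm, hH, m, Lk, rfl⟩ := hL
  have hheis := adjoint_eq_heis Hm hH Lk Ld hLd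
  have hfix : ∀ Z, (heis Hm Lk Z * ρ).trace = 0 := by
    intro Z
    have := hLd Zᴴ ρ
    rw [hρfix, mul_zero, trace_zero, hheis, heis_conj Hm hH, conjTranspose_conjTranspose] at this
    exact this
  set A := Subalgebra.centralizer ℂ (genSet Hm Lk) with hAdef
  have hS := genSet_star Hm hH Lk
  have hker : ∀ X, X ∈ LinearMap.ker Ld ↔ X ∈ A := by
    intro X
    rw [LinearMap.mem_ker, hheis]
    exact ker_heis hρ Hm hH Lk hfix X
  have hfr : Module.finrank ℂ (LinearMap.ker (lindbladMap Hm Lk)) ≤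
      Module.finrank ℂ (LinearMap.ker Ld) := by
    apply finrank_ker_le
    intro X Y
    have := hLd Xᴴ Y
    rwa [hheis, heis_conj Hm hH, conjTranspose_conjTranspose, ← hheis] at this
  have hρu : IsUnit ρ.det := (Matrix.isUnit_iff_isUnit_det _).1 hρ.isUnit
  have hr : ∀ Y, Y ∈ LinearMap.ker (lindbladMap Hm Lk) ↔ ∃ X ∈ LinearMap.ker Ld, Y = X * ρ := by
    apply map_eq_of_finrank _ _ hfr (LinearMap.mulRight ℂ ρ)
    · intro X Y hXY
      simp only [LinearMap.mulRight_apply] at hXY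
      have := congrArg (· * ρ⁻¹) hXY
      simpa [mul_assoc, mul_nonsing_inv _ hρu] using this
    · intro X hX
      rw [LinearMap.mulRight_apply, LinearMap.mem_ker,
        lindblad_mul_left Hm Lk X ρ ((hker X).1 hX), hρfix, mul_zero]
  have hl : ∀ X ∈ A, ρ * X ∈ LinearMap.ker (lindbladMap Hm Lk) := by
    intro X hX
    rw [LinearMap.mem_ker, lindblad_mul_right Hm Lk X ρ hX, hρfix, zero_mul]
  have hnorm : ∀ X ∈ A, ∃ X' ∈ A, ρ * X = X' * ρ := by
    intro X hX
    obtain ⟨X', h1, h2⟩ := (hr _).1 (hl X hX)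
    exact ⟨X', (hker _).1 h1, h2⟩
  obtain ⟨hh, hhh⟩ := msqrt_spec hρ
  set h := msqrt ρ with hdef
  have hhu : IsUnit h.det := (Matrix.isUnit_iff_isUnit_det _).1 hh.isUnit
  have hhi : h * h⁻¹ = 1 := mul_nonsing_inv _ hhu
  have hih : h⁻¹ * h = 1 := nonsing_inv_mul _ hhu
  have hmod : ∀ X ∈ LinearMap.ker Ld, h * X * h⁻¹ ∈ LinearMap.ker Ld := by
    apply sqrt_modular hh
    intro X hX
    obtain ⟨X', h1, h2⟩ := hnorm X ((hker X).1 hX)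
    have : ρ * (h⁻¹ * h⁻¹) = 1 := by
      rw [← hhh, mul_assoc, ← mul_assoc h h⁻¹, hhi, one_mul, hhi]
    rw [hhh, h2, mul_assoc, this, mul_one]
    exact (hker _).2 h1
  refine ⟨?_, ?_⟩
  · ext Y
    refine map_eq_of_finrank _ _ hfr (LinearMap.mulRight ℂ h ∘ₗ LinearMap.mulLeft ℂ h) ?_ ?_ Y
    · intro X Z hXZ
      have h1 : h * X * h = h * Z * h := hXZ
      have h2 := congrArg (fun M => h⁻¹ * M * h⁻¹) h1
      simp only [mul_assoc, hhi, mul_one] at h2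
      simpa only [← mul_assoc, hih, one_mul] using h2
    · intro X hX
      change h * X * h ∈ _
      rw [hr]
      refine ⟨h * X * h⁻¹, hmod X hX, ?_⟩
      rw [← hhh, mul_assoc (h * X), ← mul_assoc h⁻¹, hih, one_mul]
  · obtain ⟨b, dA, dB, W, hW1, hW2, hA, hB, hX⟩ := structure_thm hS
    have hcard : Fintype.card ι = Fintype.card (Σ l : Fin b, Fin (dA l) × Fin (dB l)) := by
      have h1 := trace_mul_comm W Wᴴ
      rw [hW1, hW2, trace_one, trace_one] at h1
      exact_mod_cast h1
    let e := Fintype.equivOfCardEq hcard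
    let U : Matrix ι ι ℂ := W.submatrix id e
    have hUM : ∀ M : Matrix (Σ l : Fin b, Fin (dA l) × Fin (dB l))
        (Σ l : Fin b, Fin (dA l) × Fin (dB l)) ℂ, U * M.submatrix e e * Uᴴ = W * M * Wᴴ := by
      intro M
      have h1 : U * M.submatrix e e = (W * M).submatrix id e := by
        rw [submatrix_mul_equiv]
      have h2 : Uᴴ = Wᴴ.submatrix e id := by rw [conjTranspose_submatrix]
      rw [h1, h2, submatrix_mul_equiv, submatrix_id_id]
    refine ⟨b, dA, dB, e, U, ?_, ?_, ?_⟩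
    · rw [mem_unitaryGroup_iff]
      have := hUM 1
      rw [submatrix_one_equiv, Matrix.mul_one, Matrix.mul_one, hW2] at this
      exact this
    · ext X
      simp only [hUM]
      exact (hker X).trans (hX X)
    · simp only [hUM]
      have hinj : Function.Injective W.mulVec := by
        intro v w hvw
        have := congrArg (fun z => Wᴴ *ᵥ z) hvw
        simpa [mulVec_mulVec, hW1] using this
      have hback : ∀ Z : Matrix ι ι ℂ, W * (Wᴴ * Z * W) * Wᴴ = Z := by
        intro Z
        rw [Matrix.mul_assoc, Matrix.mul_assoc, Matrix.mul_assoc, hW2, Matrix.mul_one,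
          ← Matrix.mul_assoc, hW2, Matrix.one_mul]
      obtain ⟨p, ρA, τB, hp, h1, h2, h3⟩ := rho_structure hA hB (Wᴴ * ρ * W)
        (hρ.conjTranspose_mul_mul_same hinj) (by
          intro B
          obtain ⟨X', hX', hρX⟩ := hnorm _ ((hX _).2 ⟨B, rfl⟩)
          obtain ⟨B', rfl⟩ := (hX _).1 hX'
          refine ⟨B', ?_⟩
          have := congrArg (fun Z => Wᴴ * Z * W) hρX
          simp only [Matrix.mul_assoc, hW1, Matrix.mul_one] at this
          rw [← Matrix.mul_assoc Wᴴ W, hW1, Matrix.one_mul] at this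
          simp only [Matrix.mul_assoc]
          exact this)
      refine ⟨p, ρA, τB, hp, h1, h2, ?_⟩
      rw [← h3, hback]

end QDS
end

section
/- Let ρ be a full-rank density operator on H and let A ⊆ B(H) be a unital †-closed subalgebra; set A_ρ = ρ^{1/2} A ρ^{1/2} (a ρ-distorted algebra). Then there exists a CPTP map T : B(H) → B(H) with fix(T) = A_ρ if and only if A_ρ is invariant under the modular map M_{1/2}(X) = ρ^{1/2} X ρ^{−1/2}, i.e., ρ^{1/2} A_ρ ρ^{−1/2} ⊆ A_ρ. -/
namespace QDS

open Matrix
open scoped ComplexOrder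

section Helpers
variable {ι : Type*} [Fintype ι] [DecidableEq ι]

section
open scoped MatrixOrder Matrix.Norms.L2Operator

theorem exists_defect (K : Matrix ι ι ℂ) (hK : K.PosSemidef) :
    ∃ (e : ℝ) (G : Matrix ι ι ℂ), 0 < e ∧ Gᴴ = G ∧ G * G = 1 - ((e : ℂ) ^ 2) • K ∧
      ∀ X, Commute K X → Commute G X := by
  have hsa : IsSelfAdjoint K := hK.isHermitian
  have h1 := hsa.le_algebraMap_norm_self
  set c : ℝ := ‖K‖ + 1 with hc
  have hcpos : 0 < c := by positivity
  have h2 : K ≤ algebraMap ℝ _ c := h1.trans (algebraMap_mono _ (by linarith))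
  have h3 : 0 ≤ 1 - ((Real.sqrt c⁻¹ : ℝ) : ℂ) ^ 2 • K := by
    have h4 : c⁻¹ • K ≤ c⁻¹ • (algebraMap ℝ (Matrix ι ι ℂ) c) :=
      smul_le_smul_of_nonneg_left h2 (by positivity)
    rw [sub_nonneg]
    convert h4 using 1
    · ext i j
      simp only [Matrix.smul_apply, smul_eq_mul, Complex.real_smul]
      rw [← Complex.ofReal_pow, Real.sq_sqrt (by positivity)]
    · rw [Algebra.algebraMap_eq_smul_one, smul_smul, inv_mul_cancel₀ hcpos.ne', one_smul]
  refine ⟨Real.sqrt c⁻¹, CFC.sqrt (1 - ((Real.sqrt c⁻¹ : ℝ) : ℂ) ^ 2 • K), by positivity, ?_, ?_, ?_⟩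
  · exact (CFC.sqrt_nonneg _).posSemidef.isHermitian
  · exact CFC.sqrt_mul_sqrt_self _ h3
  · intro X hX
    rw [CFC.sqrt_eq_cfc]
    apply Commute.cfc_nnreal
    exact (Commute.one_left X).sub_left (hX.smul_left _)

theorem msqrt_spec_s1 (ρ : Matrix ι ι ℂ) (hρ : ρ.PosDef) (s : Matrix ι ι ℂ) 
   (hs : s.PosSemidef) (hss : s * s = ρ) : s.PosDef := by
  refine hs.posDef_iff_isUnit.2 ?_
  have : IsUnit (s * s) := hss ▸ hρ.isUnit
  exact isUnit_of_mul_isUnit_left this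

theorem exists_sqrt (ρ : Matrix ι ι ℂ) (hρ : ρ.PosDef) : ∃ B : Matrix ι ι ℂ, B.PosSemidef ∧ B * B = ρ :=
  ⟨CFC.sqrt ρ, (CFC.sqrt_nonneg _).posSemidef, CFC.sqrt_mul_sqrt_self _ hρ.posSemidef.nonneg⟩

end

/-- The spectral matrix-unit family attached to a positive definite matrix. -/
theorem exists_units_s1 (s : Matrix ι ι ℂ) (hs : s.PosDef) :
    ∃ (d : ι → ℝ) (W : ι × ι → Matrix ι ι ℂ), (∀ i, 0 < d i) ∧
      Submodule.span ℂ (Set.range W) = ⊤ ∧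
      ∀ p, s * W p * s⁻¹ = ((d p.1 / d p.2 : ℝ) : ℂ) • W p := by
  set U : Matrix ι ι ℂ := (hs.isHermitian.eigenvectorUnitary : Matrix ι ι ℂ) with hU
  set d := hs.isHermitian.eigenvalues with hd
  have hUU : Uᴴ * U = 1 := Unitary.coe_star_mul_self hs.isHermitian.eigenvectorUnitary
  have hUU' : U * Uᴴ = 1 := Unitary.coe_mul_star_self hs.isHermitian.eigenvectorUnitary
  have hdp : ∀ i, 0 < d i := hs.eigenvalues_pos
  have hsp : s = U * diagonal (fun i => (d i : ℂ)) * Uᴴ := by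
    have := hs.isHermitian.spectral_theorem
    rw [Unitary.conjStarAlgAut_apply] at this
    exact this
  have hinv : s⁻¹ = U * diagonal (fun i => ((d i)⁻¹ : ℂ)) * Uᴴ := by
    apply Matrix.inv_eq_right_inv
    rw [hsp]
    calc _ = U * diagonal (fun i => (d i : ℂ)) * (Uᴴ * U) * diagonal (fun i => ((d i)⁻¹ : ℂ)) * Uᴴ := by
          noncomm_ring
      _ = U * (diagonal (fun i => (d i : ℂ)) * diagonal (fun i => ((d i)⁻¹ : ℂ))) * Uᴴ := by
          rw [hUU]; noncomm_ring
      _ = 1 := by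
          rw [diagonal_mul_diagonal]
          have : (fun i => (d i : ℂ) * ((d i)⁻¹ : ℂ)) = fun _ => 1 := by
            funext i; exact mul_inv_cancel₀ (by exact_mod_cast (hdp i).ne')
          rw [this]; simp [hUU']
  refine ⟨d, fun p => U * single p.1 p.2 1 * Uᴴ, hdp, ?_, ?_⟩
  · rw [eq_top_iff]
    intro X _
    have : X = ∑ i, ∑ j, (Uᴴ * X * U) i j • (U * single i j 1 * Uᴴ) := by
      calc X = U * (Uᴴ * X * U) * Uᴴ := by
            calc X = (U * Uᴴ) * X * (U * Uᴴ) := by rw [hUU']; simp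
              _ = _ := by noncomm_ring
        _ = U * (∑ i, ∑ j, (Uᴴ * X * U) i j • single i j 1) * Uᴴ := by
            congr 2
            conv_lhs => rw [matrix_eq_sum_single (Uᴴ * X * U)]
            simp [smul_single]
        _ = _ := by
            simp only [Finset.mul_sum, Finset.sum_mul, mul_smul_comm, smul_mul_assoc]
    rw [this]
    exact Submodule.sum_mem _ fun i _ => Submodule.sum_mem _ fun j _ =>
      Submodule.smul_mem _ _ (Submodule.subset_span ⟨(i, j), rfl⟩)
  · rintro ⟨i, j⟩
    rw [hinv]
    conv_lhs => rw [hsp]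
    calc _ = U * diagonal (fun i => (d i : ℂ)) * (Uᴴ * U) * single i j 1 * (Uᴴ * U) * diagonal (fun i => ((d i)⁻¹ : ℂ)) * Uᴴ := by
          noncomm_ring
      _ = U * (diagonal (fun i => (d i : ℂ)) * single i j 1 * diagonal (fun i => ((d i)⁻¹ : ℂ))) * Uᴴ := by
          rw [hUU]; noncomm_ring
      _ = U * (((d i / d j : ℝ) : ℂ) • single i j 1) * Uᴴ := by
          congr 2
          ext a b
          rw [mul_diagonal, diagonal_mul]
          simp only [single_apply, Matrix.smul_apply, smul_eq_mul]
          split_ifs with h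
          · obtain ⟨rfl, rfl⟩ := h
            push_cast
            field_simp
          · simp
      _ = _ := by simp only [mul_smul_comm, smul_mul_assoc]

/-- Conjugation `X ↦ s X s⁻¹`. -/
noncomputable def adm (s : Matrix ι ι ℂ) : Module.End ℂ (Matrix ι ι ℂ) :=
  (LinearMap.mulRight ℂ s⁻¹).comp (LinearMap.mulLeft ℂ s)

theorem adm_apply (s X : Matrix ι ι ℂ) : adm s X = s * X * s⁻¹ := rfl

theorem aeval_eig {E : Type*} [AddCommGroup E] [Module ℂ E] (f : Module.End ℂ E) (p : Polynomial ℂ)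
    (x : E) (c : ℂ) (h : f x = c • x) : (Polynomial.aeval f p) x = p.eval c • x := by
  by_cases hx : x = 0
  · simp [hx]
  · exact Module.End.aeval_apply_of_hasEigenvector ⟨Module.End.mem_eigenspace_iff.2 h, hx⟩

theorem aeval_mem {E : Type*} [AddCommGroup E] [Module ℂ E] (f : Module.End ℂ E) (p : Polynomial ℂ)
    (V : Submodule ℂ E) (hV : ∀ x ∈ V, f x ∈ V) (x : E) (hx : x ∈ V) :
    (Polynomial.aeval f p) x ∈ V := by
  have hp : ∀ n : ℕ, (f ^ n) x ∈ V := by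
    intro n
    induction n with
    | zero => simpa using hx
    | succ k ih => rw [pow_succ']; exact hV _ ih
  rw [Polynomial.aeval_eq_sum_range, LinearMap.sum_apply]
  exact Submodule.sum_mem _ fun i _ => Submodule.smul_mem _ _ (hp i)

theorem inv_of_sq (s : Matrix ι ι ℂ) (hs : s.PosDef) (V : Submodule ℂ (Matrix ι ι ℂ))
    (hV : ∀ X ∈ V, (s * s) * X * (s⁻¹ * s⁻¹) ∈ V) (X : Matrix ι ι ℂ) (hX : X ∈ V) :
    s * X * s⁻¹ ∈ V := by
  obtain ⟨d, W, hd, hspan, hW⟩ := exists_units_s1 s hs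
  let f : Module.End ℂ (Matrix ι ι ℂ) := adm s * adm s
  have hf : ∀ Y, f Y = (s * s) * Y * (s⁻¹ * s⁻¹) := by
    intro Y
    change s * (s * Y * s⁻¹) * s⁻¹ = _
    noncomm_ring
  let S : Finset ℂ := Finset.univ.image fun p : ι × ι => ((d p.1 / d p.2 : ℝ) : ℂ) ^ 2
  let P : Polynomial ℂ := Lagrange.interpolate S id (fun z => ((Real.sqrt z.re : ℝ) : ℂ))
  have hP : ∀ p : ι × ι, P.eval (((d p.1 / d p.2 : ℝ) : ℂ) ^ 2) = ((d p.1 / d p.2 : ℝ) : ℂ) := by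
    intro p
    have hm : ((d p.1 / d p.2 : ℝ) : ℂ) ^ 2 ∈ S := Finset.mem_image.2 ⟨p, Finset.mem_univ _, rfl⟩
    have := Lagrange.eval_interpolate_at_node (fun z : ℂ => ((Real.sqrt z.re : ℝ) : ℂ))
      (s := S) (v := id) (Set.injOn_id _) hm
    simp only [id] at this
    rw [this, ← Complex.ofReal_pow, Complex.ofReal_re, Real.sqrt_sq (div_pos (hd _) (hd _)).le]
  have heq : Polynomial.aeval f P = adm s := by
    apply LinearMap.ext_on_range hspan
    intro p
    have h1 : adm s (W p) = ((d p.1 / d p.2 : ℝ) : ℂ) • W p := hW p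
    rw [aeval_eig f P (W p) (((d p.1 / d p.2 : ℝ) : ℂ) ^ 2), hP, h1]
    change adm s (adm s (W p)) = _
    rw [h1, map_smul, h1, smul_smul, sq]
  rw [← adm_apply, ← heq]
  exact aeval_mem f P V (fun x hx => by rw [hf]; exact hV x hx) X hX

/-- An invariant subspace is spanned by modular eigenvectors. -/
theorem exists_eigenfamily (s : Matrix ι ι ℂ) (hs : s.PosDef) (V : Submodule ℂ (Matrix ι ι ℂ))
    (hV : ∀ X ∈ V, s * X * s⁻¹ ∈ V) :
    ∃ (κ : Type) (_ : Fintype κ) (M : κ → Matrix ι ι ℂ) (l : κ → ℝ), (∀ k, 0 < l k) ∧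
      (∀ k, M k ∈ V) ∧ (∀ k, s * M k * s⁻¹ = (l k : ℂ) • M k) ∧
      V ≤ Submodule.span ℂ (Set.range M) := by
  obtain ⟨d, W, hd, hspan, hW⟩ := exists_units_s1 s hs
  let S : Finset ℝ := Finset.univ.image fun p : ι × ι => d p.1 / d p.2
  have hSpos : ∀ x ∈ S, 0 < x := by
    intro x hx
    obtain ⟨p, _, rfl⟩ := Finset.mem_image.1 hx
    exact div_pos (hd _) (hd _)
  have hmem : ∀ p : ι × ι, d p.1 / d p.2 ∈ S := fun p => Finset.mem_image.2 ⟨p, Finset.mem_univ _, rfl⟩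
  have hinj : Set.InjOn (fun x : ℝ => (x : ℂ)) S := Complex.ofReal_injective.injOn
  let P : ℝ → Polynomial ℂ := fun x => Lagrange.basis S (fun x : ℝ => (x : ℂ)) x
  let b := Module.finBasis ℂ V
  have hPW : ∀ x ∈ S, ∀ p, Polynomial.aeval (adm s) (P x) (W p) =
      if x = d p.1 / d p.2 then W p else 0 := by
    intro x hx p
    rw [aeval_eig (adm s) (P x) (W p) _ (hW p)]
    split_ifs with h
    · have := Lagrange.eval_basis_self hinj hx
      simp only [P]
      rw [← h, this, one_smul]
    · have := Lagrange.eval_basis_of_ne (v := fun x : ℝ => (x : ℂ)) h (hmem p)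
      simp only [P]
      rw [this, zero_smul]
  refine ⟨Fin (Module.finrank ℂ V) × S, inferInstance,
    fun k => Polynomial.aeval (adm s) (P k.2) (b k.1 : Matrix ι ι ℂ), fun k => k.2,
    fun k => hSpos _ k.2.2, fun k => aeval_mem _ _ V hV _ (b k.1).2, ?_, ?_⟩
  · rintro ⟨k, x, hx⟩
    have heq : adm s * Polynomial.aeval (adm s) (P x) = (x : ℂ) • Polynomial.aeval (adm s) (P x) := by
      apply LinearMap.ext_on_range hspan
      intro p
      change adm s (Polynomial.aeval (adm s) (P x) (W p)) = (x : ℂ) • (Polynomial.aeval (adm s) (P x) (W p))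
      rw [hPW x hx]
      split_ifs with h
      · rw [h]; exact hW p
      · simp
    exact LinearMap.congr_fun heq (b k : Matrix ι ι ℂ)
  · intro X hX
    have hid : ∀ Y : Matrix ι ι ℂ, ∑ x ∈ S, Polynomial.aeval (adm s) (P x) Y = Y := by
      have : ∑ x ∈ S, Polynomial.aeval (adm s) (P x) = (1 : Module.End ℂ (Matrix ι ι ℂ)) := by
        apply LinearMap.ext_on_range hspan
        intro p
        rw [LinearMap.sum_apply, Finset.sum_congr rfl fun x hx => hPW x hx p]
        simp [hmem p]
      intro Y
      rw [← LinearMap.sum_apply, this]; rfl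
    have hb : ∀ k, (b k : Matrix ι ι ℂ) ∈ Submodule.span ℂ (Set.range fun k : Fin (Module.finrank ℂ V) × S =>
        Polynomial.aeval (adm s) (P k.2) (b k.1 : Matrix ι ι ℂ)) := by
      intro k
      rw [← hid (b k : Matrix ι ι ℂ)]
      exact Submodule.sum_mem _ fun x hx => Submodule.subset_span ⟨(k, ⟨x, hx⟩), rfl⟩
    have := congrArg (Subtype.val) (b.sum_repr ⟨X, hX⟩)
    simp only [Submodule.coe_sum, Submodule.coe_smul] at this
    rw [← this]
    exact Submodule.sum_mem _ fun k _ => Submodule.smul_mem _ _ (hb k)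


theorem kraus_commute {κ : Type*} [Fintype κ] (s : Matrix ι ι ℂ) (hsH : sᴴ = s) (hsu : IsUnit s)
    (N : κ → Matrix ι ι ℂ) (h1 : ∑ k, N k * (N k)ᴴ = 1)
    (h2 : ∑ k, (N k)ᴴ * (s * s) * N k = s * s) (X : Matrix ι ι ℂ)
    (hX : ∑ k, N k * X * (N k)ᴴ = X) (k : κ) : X * (N k)ᴴ = (N k)ᴴ * X := by
  have hX' : ∑ k, N k * Xᴴ * (N k)ᴴ = Xᴴ := by
    conv_rhs => rw [← hX, conjTranspose_sum]
    refine Finset.sum_congr rfl fun k _ => ?_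
    simp only [conjTranspose_mul, conjTranspose_conjTranspose, mul_assoc]
  let C : κ → Matrix ι ι ℂ := fun k => X * (N k)ᴴ - (N k)ᴴ * X
  have hC : ∑ k, (C k)ᴴ * C k = (∑ k, N k * (Xᴴ * X) * (N k)ᴴ) - Xᴴ * X := by
    have : ∀ k, (C k)ᴴ * C k = N k * (Xᴴ * X) * (N k)ᴴ - (N k * Xᴴ * (N k)ᴴ) * X
        - Xᴴ * (N k * X * (N k)ᴴ) + Xᴴ * (N k * (N k)ᴴ) * X := by
      intro k
      simp only [C, conjTranspose_sub, conjTranspose_mul, conjTranspose_conjTranspose]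
      noncomm_ring
    simp only [this, Finset.sum_add_distrib, Finset.sum_sub_distrib]
    rw [← Finset.sum_mul, ← Finset.mul_sum, ← Finset.sum_mul, ← Finset.mul_sum, hX, hX', h1]
    noncomm_ring
  have htr : ∑ k, ((C k * s)ᴴ * (C k * s)).trace = 0 := by
    have e1 : ∀ k, ((C k * s)ᴴ * (C k * s)).trace = ((s * s) * ((C k)ᴴ * C k)).trace := by
      intro k
      rw [conjTranspose_mul, hsH, mul_assoc s s, trace_mul_comm s (s * _)]
      simp only [mul_assoc]
    simp only [e1]
    rw [← trace_sum, ← Finset.mul_sum, hC, mul_sub, trace_sub, sub_eq_zero, Finset.mul_sum, trace_sum]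
    have e2 : ∀ k, ((s * s) * (N k * (Xᴴ * X) * (N k)ᴴ)).trace
        = ((N k)ᴴ * (s * s) * N k * (Xᴴ * X)).trace := by
      intro k
      rw [← mul_assoc (s * s), trace_mul_comm _ (N k)ᴴ]
      simp only [mul_assoc]
    simp only [e2]
    rw [← trace_sum, ← Finset.sum_mul, h2]
  rw [Finset.sum_eq_zero_iff_of_nonneg
    (fun k _ => (posSemidef_conjTranspose_mul_self (C k * s)).trace_nonneg)] at htr
  have h3 : C k * s = 0 := trace_conjTranspose_mul_self_eq_zero_iff.1 (htr k (Finset.mem_univ k))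
  have h4 : C k = 0 := hsu.mul_left_eq_zero.1 h3
  exact sub_eq_zero.1 h4

theorem dist_commute {κ : Type*} [Fintype κ] (s : Matrix ι ι ℂ) (hsH : sᴴ = s)
    (h : s * s⁻¹ = 1) (h' : s⁻¹ * s = 1) (hsu : IsUnit s)
    (M : κ → Matrix ι ι ℂ) (h1 : ∑ k, (M k)ᴴ * M k = 1)
    (h2 : ∑ k, M k * (s * s) * (M k)ᴴ = s * s) (X : Matrix ι ι ℂ)
    (hX : ∑ k, M k * (s * X * s) * (M k)ᴴ = s * X * s) (k : κ) :
    X * (s⁻¹ * M k * s) = (s⁻¹ * M k * s) * X := by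
  have hiH : (s⁻¹)ᴴ = s⁻¹ := by rw [conjTranspose_nonsing_inv, hsH]
  have hN : ∀ k, (s⁻¹ * M k * s)ᴴ = s * (M k)ᴴ * s⁻¹ := by
    intro k; simp only [conjTranspose_mul, hsH, hiH, mul_assoc]
  have key : ∀ Y, ∑ k, M k * (s * Y * s) * (M k)ᴴ = s * Y * s →
      ∑ k, (s⁻¹ * M k * s) * Y * (s⁻¹ * M k * s)ᴴ = Y := by
    intro Y hY
    calc _ = ∑ k, s⁻¹ * (M k * (s * Y * s) * (M k)ᴴ) * s⁻¹ := by
          refine Finset.sum_congr rfl fun k _ => ?_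
          rw [hN]; simp only [mul_assoc]
      _ = (s⁻¹ * s) * Y * (s * s⁻¹) := by
          rw [← Finset.sum_mul, ← Finset.mul_sum, hY]; simp only [mul_assoc]
      _ = Y := by rw [h, h']; simp
  have g1 : ∑ k, (s⁻¹ * M k * s) * (s⁻¹ * M k * s)ᴴ = 1 := by
    have := key 1 (by simpa using h2)
    simpa using this
  have g2 : ∑ k, (s⁻¹ * M k * s)ᴴ * (s * s) * (s⁻¹ * M k * s) = s * s := by
    calc _ = ∑ k, s * ((M k)ᴴ * M k) * s := by
          refine Finset.sum_congr rfl fun k _ => ?_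
          rw [hN]
          calc _ = s * (M k)ᴴ * (s⁻¹ * s) * (s * s⁻¹) * M k * s := by simp only [mul_assoc]
            _ = _ := by rw [h, h']; simp [mul_assoc]
      _ = _ := by rw [← Finset.sum_mul, ← Finset.mul_sum, h1]; simp
  have hXs : ∑ k, M k * (s * Xᴴ * s) * (M k)ᴴ = s * Xᴴ * s := by
    have := congrArg conjTranspose hX
    rw [conjTranspose_sum] at this
    simpa only [conjTranspose_mul, conjTranspose_conjTranspose, hsH, mul_assoc] using this
  have := kraus_commute s hsH hsu _ g1 g2 Xᴴ (key _ hXs) k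
  have := congrArg conjTranspose this
  simp only [conjTranspose_mul Xᴴ, conjTranspose_mul _ Xᴴ, conjTranspose_conjTranspose] at this
  exact this.symm

theorem bicommutant (A : Subalgebra ℂ (Matrix ι ι ℂ)) (hstar : ∀ X ∈ A, Xᴴ ∈ A)
    (Y : Matrix ι ι ℂ)
    (hY : ∀ N : Matrix ι ι ℂ, (∀ X ∈ A, X * N = N * X) → Y * N = N * Y) : Y ∈ A := by
  let B : LinearMap.BilinForm ℂ (Matrix ι ι ℂ) :=
    (LinearMap.mul ℂ (Matrix ι ι ℂ)).compr₂ (traceLinearMap ι ℂ ℂ)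
  have hB : ∀ X Z, B X Z = (X * Z).trace := fun X Z => rfl
  have hrefl : B.IsRefl := by
    intro X Z h
    rw [hB] at h ⊢
    rwa [trace_mul_comm]
  let A' := Subalgebra.toSubmodule A
  have hc : IsCompl A' (B.orthogonal A') := by
    rw [LinearMap.BilinForm.isCompl_orthogonal_iff_disjoint hrefl, Submodule.disjoint_def]
    intro X hX hX'
    have := hX' Xᴴ (hstar X hX)
    exact trace_conjTranspose_mul_self_eq_zero_iff.1 this
  let P := A'.projection (B.orthogonal A') hc
  have hPA : ∀ X ∈ A, P X = X := fun X hX => Submodule.projection_apply_of_mem_left hc hX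
  have hPc : ∀ a ∈ A, ∀ X, P (a * X) = a * P X := by
    intro a ha X
    have hm : P X ∈ A := Submodule.projection_apply_mem hc X
    have h1 : X - P X ∈ B.orthogonal A' := by
      rw [← Submodule.projection_apply_eq_zero_iff hc]
      change P (X - P X) = 0
      rw [map_sub, hPA _ hm, sub_self]
    have h2 : a * (X - P X) ∈ B.orthogonal A' := by
      intro c hcA
      have := h1 (c * a) (A.mul_mem hcA ha)
      change (c * (a * (X - P X))).trace = 0
      rw [← mul_assoc]
      exact this
    have h3 : P (a * (X - P X)) = 0 := (Submodule.projection_apply_eq_zero_iff hc).2 h2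
    rw [mul_sub, map_sub, hPA _ (A.mul_mem ha hm), sub_eq_zero] at h3
    exact h3
  let b : ι → ι → Matrix ι ι ℂ := fun i j => Matrix.of fun a c => P (single c i 1) a j
  have hbA : ∀ i j, ∀ X ∈ A, X * b i j = b i j * X := by
    intro i j X hX
    ext a c
    have e1 : X * single c i 1 = ∑ e, X e c • single e i (1 : ℂ) := by
      ext p q
      simp [Matrix.mul_apply, Matrix.sum_apply, single_apply]
      by_cases h : i = q <;> simp [h]
    have e2 := congrFun (congrFun (hPc X hX (single c i 1)) a) j
    rw [e1, map_sum, Matrix.sum_apply] at e2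
    simp only [map_smul, Matrix.smul_apply, smul_eq_mul] at e2
    rw [Matrix.mul_apply, Matrix.mul_apply]
    rw [Matrix.mul_apply] at e2
    simp only [b, Matrix.of_apply]
    rw [← e2]
    exact Finset.sum_congr rfl fun _ _ => mul_comm _ _
  have hP : ∀ X a j, P X a j = ∑ i, (b i j * X) a i := by
    intro X a j
    have e1 : X = ∑ c, ∑ i, X c i • single c i (1 : ℂ) := by
      conv_lhs => rw [matrix_eq_sum_single X]
      simp [smul_single]
    conv_lhs => rw [e1]
    simp only [map_sum, map_smul, Matrix.sum_apply, Matrix.smul_apply, smul_eq_mul, Matrix.mul_apply, b,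
      Matrix.of_apply]
    rw [Finset.sum_comm]
    exact Finset.sum_congr rfl fun _ _ => Finset.sum_congr rfl fun _ _ => mul_comm _ _
  have hPY : P Y = Y := by
    have h1 : P 1 = 1 := hPA 1 A.one_mem
    ext a j
    calc P Y a j = ∑ i, (Y * (b i j * 1) : Matrix ι ι ℂ) a i := by
          rw [hP]
          refine Finset.sum_congr rfl fun i _ => ?_
          rw [mul_one, hY _ (hbA i j)]
      _ = ∑ e, Y a e * P 1 e j := by
          simp only [hP]
          simp only [fun Z : Matrix ι ι ℂ => @Matrix.mul_apply _ _ _ _ _ _ _ Y Z, Finset.mul_sum]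
          rw [Finset.sum_comm]
      _ = Y a j := by rw [h1, ← Matrix.mul_apply, mul_one]
  rw [← hPY]
  exact Submodule.projection_apply_mem hc Y

theorem cptp_of_kraus {κ : Type*} [Fintype κ] (M : κ → Matrix ι ι ℂ)
    (h1 : ∑ k, (M k)ᴴ * M k = 1) :
    ∃ T : Matrix ι ι ℂ →ₗ[ℂ] Matrix ι ι ℂ, IsCPTP T ∧ ∀ X, T X = ∑ k, M k * X * (M k)ᴴ := by
  let T : Matrix ι ι ℂ →ₗ[ℂ] Matrix ι ι ℂ :=
    ∑ k, (LinearMap.mulRight ℂ (M k)ᴴ).comp (LinearMap.mulLeft ℂ (M k))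
  have hT : ∀ X, T X = ∑ k, M k * X * (M k)ᴴ := by
    intro X
    simp [T, LinearMap.sum_apply]
  let e := (Fintype.equivFin κ).symm
  refine ⟨T, ⟨Fintype.card κ, fun i => M (e i), ?_, ?_⟩, hT⟩
  · intro X
    rw [hT]
    exact (Equiv.sum_comp e fun k => M k * X * (M k)ᴴ).symm
  · rw [← h1]
    exact Equiv.sum_comp e fun k => (M k)ᴴ * M k

theorem backward (s : Matrix ι ι ℂ) (hs : s.PosDef)
    (A : Subalgebra ℂ (Matrix ι ι ℂ)) (hstar : ∀ X ∈ A, Xᴴ ∈ A)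
    (hinv : ∀ X ∈ A, s * X * s⁻¹ ∈ A) :
    ∃ T : Matrix ι ι ℂ →ₗ[ℂ] Matrix ι ι ℂ, IsCPTP T ∧
        fixSet T = {Y | ∃ X ∈ A, Y = s * X * s} := by
  have hsH : sᴴ = s := hs.isHermitian
  have hsu : IsUnit s := hs.isUnit
  have hdet : IsUnit s.det := (Matrix.isUnit_iff_isUnit_det s).1 hsu
  have h : s * s⁻¹ = 1 := Matrix.mul_nonsing_inv _ hdet
  have h' : s⁻¹ * s = 1 := Matrix.nonsing_inv_mul _ hdet
  have hiH : (s⁻¹)ᴴ = s⁻¹ := by rw [conjTranspose_nonsing_inv, hsH]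
  have hinv' : ∀ X ∈ A, s⁻¹ * X * s ∈ A := by
    intro X hX
    have := hstar _ (hinv _ (hstar X hX))
    simpa only [conjTranspose_mul, conjTranspose_conjTranspose, hsH, hiH, mul_assoc] using this
  let V : Submodule ℂ (Matrix ι ι ℂ) :=
    Subalgebra.toSubmodule (Subalgebra.centralizer ℂ (A : Set (Matrix ι ι ℂ)))
  have hVmem : ∀ N, N ∈ V ↔ ∀ X ∈ A, X * N = N * X := fun N => Subalgebra.mem_centralizer_iff ℂ
  have hV : ∀ N ∈ V, s * N * s⁻¹ ∈ V := by
    intro N hN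
    rw [hVmem] at hN ⊢
    intro X hX
    calc X * (s * N * s⁻¹) = (s * s⁻¹) * X * (s * N * s⁻¹) := by rw [h, one_mul]
      _ = s * ((s⁻¹ * X * s) * N) * s⁻¹ := by simp only [mul_assoc]
      _ = s * (N * (s⁻¹ * X * s)) * s⁻¹ := by rw [hN _ (hinv' X hX)]
      _ = (s * N * s⁻¹) * X * (s * s⁻¹) := by simp only [mul_assoc]
      _ = _ := by rw [h, mul_one]
  have hVs : ∀ N ∈ V, Nᴴ ∈ V := by
    intro N hN
    rw [hVmem] at hN ⊢
    intro X hX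
    have := congrArg conjTranspose (hN _ (hstar X hX))
    simpa only [conjTranspose_mul, conjTranspose_conjTranspose] using this.symm
  obtain ⟨κ, _, M, l, hl, hMV, hM, hspan⟩ := exists_eigenfamily s hs V hV
  have hlne : ∀ k, (l k : ℂ) ≠ 0 := fun k => by exact_mod_cast (hl k).ne'
  have hMs : ∀ k, M k * s = (l k : ℂ)⁻¹ • (s * M k) := by
    intro k
    have : s * M k = (l k : ℂ) • (M k * s) := by
      calc s * M k = (s * M k * s⁻¹) * s := by rw [mul_assoc, h', mul_one]
        _ = _ := by rw [hM, smul_mul_assoc]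
    rw [this, smul_smul, inv_mul_cancel₀ (hlne k), one_smul]
  have hsM' : ∀ k, s * (M k)ᴴ = (l k : ℂ)⁻¹ • ((M k)ᴴ * s) := by
    intro k
    have := congrArg conjTranspose (hMs k)
    simpa [conjTranspose_mul, hsH] using this
  have hsM : ∀ k, s * M k = (l k : ℂ) • (M k * s) := by
    intro k; rw [hMs, smul_smul, mul_inv_cancel₀ (hlne k), one_smul]
  have hM's : ∀ k, (M k)ᴴ * s = (l k : ℂ) • (s * (M k)ᴴ) := by
    intro k; rw [hsM', smul_smul, mul_inv_cancel₀ (hlne k), one_smul]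
  have hXM : ∀ X ∈ A, ∀ k, X * M k = M k * X := fun X hX k => (hVmem _).1 (hMV k) X hX
  have hXM' : ∀ X ∈ A, ∀ k, X * (M k)ᴴ = (M k)ᴴ * X := fun X hX k => (hVmem _).1 (hVs _ (hMV k)) X hX
  let K : Matrix ι ι ℂ := ∑ k, ((M k)ᴴ * M k + ((l k : ℂ)⁻¹ ^ 2) • (M k * (M k)ᴴ))
  have hK : K.PosSemidef := by
    refine posSemidef_sum _ fun k _ => ?_
    refine (posSemidef_conjTranspose_mul_self _).add ?_
    refine (posSemidef_self_mul_conjTranspose (M k)).smul ?_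
    rw [← Complex.ofReal_inv, ← Complex.ofReal_pow]
    exact_mod_cast (by positivity : 0 ≤ (l k)⁻¹ ^ 2)
  have hKs : Commute K s := by
    refine Commute.sum_left _ _ _ fun k _ => ?_
    refine Commute.add_left ?_ (Commute.smul_left ?_ _)
    · change (M k)ᴴ * M k * s = s * ((M k)ᴴ * M k)
      rw [mul_assoc, hMs, ← mul_assoc, hsM', mul_smul_comm, smul_mul_assoc, mul_assoc]
    · change M k * (M k)ᴴ * s = s * (M k * (M k)ᴴ)
      rw [mul_assoc, hM's, ← mul_assoc, hsM, mul_smul_comm, smul_mul_assoc, mul_assoc]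
  have hKX : ∀ X ∈ A, Commute K X := by
    intro X hX
    refine Commute.sum_left _ _ _ fun k _ => ?_
    refine Commute.add_left ?_ (Commute.smul_left ?_ _)
    · exact Commute.mul_left (hXM' X hX k).symm (hXM X hX k).symm
    · exact Commute.mul_left (hXM X hX k).symm (hXM' X hX k).symm
  obtain ⟨e, G, he, hGH, hGG, hGc⟩ := exists_defect K hK
  have hene : (e : ℂ) ≠ 0 := by exact_mod_cast he.ne'
  let Q : Option (κ ⊕ κ) → Matrix ι ι ℂ := fun o => match o with
    | none => G
    | some (Sum.inl k) => (e : ℂ) • M k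
    | some (Sum.inr k) => ((e : ℂ) * (l k : ℂ)⁻¹) • (M k)ᴴ
  have hQ1 : ∑ o, (Q o)ᴴ * Q o = 1 := by
    rw [Fintype.sum_option, Fintype.sum_sum_type]
    simp only [Q, conjTranspose_smul, conjTranspose_conjTranspose, hGH, hGG, smul_mul_assoc, mul_smul_comm,
      smul_smul, RCLike.star_def, map_mul, map_inv₀, Complex.conj_ofReal]
    rw [← Finset.sum_add_distrib]
    have : ∑ k, (((e : ℂ) * e) • ((M k)ᴴ * M k) + ((e : ℂ) * (l k : ℂ)⁻¹ * (e * (l k : ℂ)⁻¹)) • (M k * (M k)ᴴ))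
        = ((e : ℂ) ^ 2) • K := by
      simp only [K, Finset.smul_sum, smul_add, smul_smul]
      refine Finset.sum_congr rfl fun k _ => ?_
      congr 2 <;> ring
    rw [this]; abel
  have hQX : ∀ X ∈ A, ∑ o, Q o * (s * X * s) * (Q o)ᴴ = s * X * s := by
    intro X hX
    rw [Fintype.sum_option, Fintype.sum_sum_type]
    simp only [Q, conjTranspose_smul, conjTranspose_conjTranspose, hGH, smul_mul_assoc, mul_smul_comm,
      smul_smul, RCLike.star_def, map_mul, map_inv₀, Complex.conj_ofReal]
    rw [← Finset.sum_add_distrib]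
    have hGs : G * s = s * G := hGc s hKs
    have hGX : G * X = X * G := hGc X (hKX X hX)
    have e0 : G * (s * X * s) * G = s * X * (G * G) * s := by
      calc G * (s * X * s) * G = (G * s) * X * (s * G) := by simp only [mul_assoc]
        _ = s * (G * X) * (G * s) := by rw [← hGs, hGs]; simp only [mul_assoc]
        _ = _ := by rw [hGX]; simp only [mul_assoc]
    have e1 : ∀ k, M k * (s * X * s) * (M k)ᴴ = ((l k : ℂ)⁻¹ ^ 2) • (s * X * (M k * (M k)ᴴ) * s) := by
      intro k
      calc M k * (s * X * s) * (M k)ᴴ = (M k * s) * X * (s * (M k)ᴴ) := by simp only [mul_assoc]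
        _ = ((l k : ℂ)⁻¹ ^ 2) • (s * (M k * X) * ((M k)ᴴ * s)) := by
            rw [hMs, hsM']
            simp only [smul_mul_assoc, mul_smul_comm, smul_smul, mul_assoc, sq]
        _ = _ := by rw [← hXM X hX]; simp only [mul_assoc]
    have e2 : ∀ k, (M k)ᴴ * (s * X * s) * M k = ((l k : ℂ) ^ 2) • (s * X * ((M k)ᴴ * M k) * s) := by
      intro k
      calc (M k)ᴴ * (s * X * s) * M k = ((M k)ᴴ * s) * X * (s * M k) := by simp only [mul_assoc]
        _ = ((l k : ℂ) ^ 2) • (s * ((M k)ᴴ * X) * (M k * s)) := by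
            rw [hM's, hsM]
            simp only [smul_mul_assoc, mul_smul_comm, smul_smul, mul_assoc, sq]
        _ = _ := by rw [← hXM' X hX]; simp only [mul_assoc]
    have e3 : ∑ k, (((e : ℂ) * e) • (M k * (s * X * s) * (M k)ᴴ)
        + ((e : ℂ) * (l k : ℂ)⁻¹ * (e * (l k : ℂ)⁻¹)) • ((M k)ᴴ * (s * X * s) * M k))
        = s * X * (((e : ℂ) ^ 2) • K) * s := by
      simp only [K, Finset.smul_sum, Finset.mul_sum, Finset.sum_mul]
      refine Finset.sum_congr rfl fun k _ => ?_
      rw [e1, e2, smul_smul, smul_smul, smul_add, mul_add, add_mul, smul_smul, add_comm]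
      simp only [smul_mul_assoc, mul_smul_comm]
      congr 2
      · have := hlne k
        field_simp
      · ring
    rw [e3, e0, ← add_mul, ← mul_add, hGG, sub_add_cancel, mul_one]
  obtain ⟨T, hT, hTX⟩ := cptp_of_kraus Q hQ1
  refine ⟨T, hT, ?_⟩
  ext Y
  simp only [fixSet, Set.mem_ofPred_eq, hTX]
  constructor
  · intro hY
    refine ⟨s⁻¹ * Y * s⁻¹, ?_, ?_⟩
    swap
    · calc Y = (s * s⁻¹) * Y * (s⁻¹ * s) := by rw [h, h']; simp
        _ = _ := by simp only [mul_assoc]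
    have hYX : Y = s * (s⁻¹ * Y * s⁻¹) * s := by
      calc Y = (s * s⁻¹) * Y * (s⁻¹ * s) := by rw [h, h']; simp
        _ = _ := by simp only [mul_assoc]
    set X := s⁻¹ * Y * s⁻¹ with hXdef
    rw [hYX] at hY
    have hQρ : ∑ o, Q o * (s * s) * (Q o)ᴴ = s * s := by
      have := hQX 1 A.one_mem
      simpa using this
    have hcom := dist_commute s hsH h h' hsu Q hQ1 hQρ X hY
    have hcM : ∀ k, X * M k = M k * X := by
      intro k
      have := hcom (some (Sum.inl k))
      have hq : s⁻¹ * Q (some (Sum.inl k)) * s = ((e : ℂ) * (l k : ℂ)⁻¹) • M k := by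
        change s⁻¹ * ((e : ℂ) • M k) * s = _
        rw [mul_smul_comm, smul_mul_assoc, mul_assoc, hMs, mul_smul_comm, ← mul_assoc, h', one_mul, smul_smul]
      rw [hq, mul_smul_comm, smul_mul_assoc] at this
      exact smul_right_injective _ (mul_ne_zero hene (inv_ne_zero (hlne k))) this
    apply bicommutant A hstar
    intro N hN
    have hNs := hspan ((hVmem N).2 hN)
    clear hN
    induction hNs using Submodule.span_induction with
    | mem x hx => obtain ⟨k, rfl⟩ := hx; exact hcM k
    | zero => simp
    | add x y _ _ hx hy => rw [mul_add, add_mul, hx, hy]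
    | smul a x _ hx => rw [mul_smul_comm, smul_mul_assoc, hx]
  · rintro ⟨X, hX, rfl⟩
    exact hQX X hX

theorem forward (s : Matrix ι ι ℂ) (hs : s.PosDef)
    (A : Subalgebra ℂ (Matrix ι ι ℂ)) (hstar : ∀ X ∈ A, Xᴴ ∈ A)
    (T : Matrix ι ι ℂ →ₗ[ℂ] Matrix ι ι ℂ) (hT : IsCPTP T)
    (hfix : fixSet T = {Y | ∃ X ∈ A, Y = s * X * s}) (X : Matrix ι ι ℂ) (hX : X ∈ A) :
    s * X * s⁻¹ ∈ A := by
  have hsH : sᴴ = s := hs.isHermitian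
  have hsu : IsUnit s := hs.isUnit
  have hdet : IsUnit s.det := (Matrix.isUnit_iff_isUnit_det s).1 hsu
  have h : s * s⁻¹ = 1 := Matrix.mul_nonsing_inv _ hdet
  have h' : s⁻¹ * s = 1 := Matrix.nonsing_inv_mul _ hdet
  have hiH : (s⁻¹)ᴴ = s⁻¹ := by rw [conjTranspose_nonsing_inv, hsH]
  obtain ⟨m, M, hTM, hM1⟩ := hT
  have hfx : ∀ X ∈ A, ∑ k, M k * (s * X * s) * (M k)ᴴ = s * X * s := by
    intro X hX
    rw [← hTM]
    have : s * X * s ∈ fixSet T := by rw [hfix]; exact ⟨X, hX, rfl⟩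
    exact this
  have hρ : ∑ k, M k * (s * s) * (M k)ᴴ = s * s := by
    simpa using hfx 1 A.one_mem
  have key : ∀ X ∈ A, (s⁻¹ * s⁻¹) * Xᴴ * (s * s) ∈ A := by
    intro X hX
    have hc := dist_commute s hsH h h' hsu M hM1 hρ X (hfx X hX)
    set Z := s * X * s⁻¹ with hZ
    have hZM : ∀ k, Z * M k = M k * Z := by
      intro k
      calc Z * M k = s * (X * (s⁻¹ * M k * (s * s⁻¹))) := by rw [h, hZ]; simp only [mul_assoc, mul_one]
        _ = s * (X * (s⁻¹ * M k * s)) * s⁻¹ := by simp only [mul_assoc]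
        _ = (s * s⁻¹) * M k * (s * X * s⁻¹) := by rw [hc k]; simp only [mul_assoc]
        _ = M k * Z := by rw [h, one_mul]
    have hZfix : ∑ k, (M k)ᴴ * Zᴴ * ((M k)ᴴ)ᴴ = Zᴴ := by
      have : ∀ k, (M k)ᴴ * Zᴴ * ((M k)ᴴ)ᴴ = Zᴴ * ((M k)ᴴ * M k) := by
        intro k
        rw [← conjTranspose_mul, hZM, conjTranspose_mul, conjTranspose_conjTranspose, mul_assoc]
      simp only [this]
      rw [← Finset.mul_sum, hM1, mul_one]
    have hc2 := kraus_commute s hsH hsu (fun k => (M k)ᴴ) (by simpa using hM1) (by simpa using hρ) Zᴴ hZfix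
    simp only [conjTranspose_conjTranspose] at hc2
    have hmem : Zᴴ * (s * s) ∈ fixSet T := by
      change T _ = _
      rw [hTM]
      have : ∀ k, M k * (Zᴴ * (s * s)) * (M k)ᴴ = Zᴴ * (M k * (s * s) * (M k)ᴴ) := by
        intro k
        rw [← mul_assoc (M k), ← hc2]; simp only [mul_assoc]
      simp only [this]
      rw [← Finset.mul_sum, hρ]
    rw [hfix] at hmem
    obtain ⟨X', hX', he⟩ := hmem
    have hZH : Zᴴ = s⁻¹ * Xᴴ * s := by
      simp only [hZ, conjTranspose_mul, hsH, hiH, mul_assoc]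
    have : (s⁻¹ * s⁻¹) * Xᴴ * (s * s) = X' := by
      calc (s⁻¹ * s⁻¹) * Xᴴ * (s * s) = s⁻¹ * ((s⁻¹ * Xᴴ * s) * (s * (s * s⁻¹))) := by
            rw [h]; simp only [mul_assoc, mul_one]
        _ = s⁻¹ * (Zᴴ * (s * s)) * s⁻¹ := by rw [hZH]; simp only [mul_assoc]
        _ = (s⁻¹ * s) * X' * (s * s⁻¹) := by rw [he]; simp only [mul_assoc]
        _ = X' := by rw [h, h']; simp
    rw [this]; exact hX'
  refine inv_of_sq s hs (Subalgebra.toSubmodule A) ?_ X hX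
  intro X hX
  have := hstar _ (key X hX)
  change _ ∈ A
  simpa only [conjTranspose_mul, conjTranspose_conjTranspose, hsH, hiH, mul_assoc] using this

end Helpers

/-! ### Statement 1 -/

theorem stmt1
    {ι : Type*} [Fintype ι] [DecidableEq ι]
    (ρ : Matrix ι ι ℂ) (hρ : ρ.PosDef) (hρtr : ρ.trace = 1)
    (A : Subalgebra ℂ (Matrix ι ι ℂ)) (hstar : ∀ X ∈ A, Xᴴ ∈ A) :
    (∃ T : Matrix ι ι ℂ →ₗ[ℂ] Matrix ι ι ℂ, IsCPTP T ∧
        fixSet T = {Y | ∃ X ∈ A, Y = msqrt ρ * X * msqrt ρ}) ↔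
      ∀ Y ∈ {Y : Matrix ι ι ℂ | ∃ X ∈ A, Y = msqrt ρ * X * msqrt ρ},
        msqrt ρ * Y * (msqrt ρ)⁻¹ ∈
          {Y : Matrix ι ι ℂ | ∃ X ∈ A, Y = msqrt ρ * X * msqrt ρ} := by
  obtain ⟨hs0, hss⟩ : (msqrt ρ).PosSemidef ∧ msqrt ρ * msqrt ρ = ρ := by
    have h := exists_sqrt ρ hρ
    rw [msqrt, dif_pos h]
    exact h.choose_spec
  have hs : (msqrt ρ).PosDef := msqrt_spec_s1 ρ hρ _ hs0 hss
  generalize msqrt ρ = s at *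
  have hdet : IsUnit s.det := (Matrix.isUnit_iff_isUnit_det s).1 hs.isUnit
  have h : s * s⁻¹ = 1 := Matrix.mul_nonsing_inv _ hdet
  have h' : s⁻¹ * s = 1 := Matrix.nonsing_inv_mul _ hdet
  constructor
  · rintro ⟨T, hT, hfix⟩ Y ⟨X, hX, rfl⟩
    refine ⟨s * X * s⁻¹, forward s hs A hstar T hT hfix X hX, ?_⟩
    simp only [mul_assoc, h, h', mul_one]
  · intro hinv
    apply backward s hs A hstar
    intro X hX
    obtain ⟨X', hX', he⟩ := hinv _ ⟨X, hX, rfl⟩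
    have : s * X * s⁻¹ = X' := by
      calc s * X * s⁻¹ = (s⁻¹ * s) * (s * X * (s * s⁻¹)) * s⁻¹ := by rw [h, h']; simp
        _ = s⁻¹ * (s * (s * X * s) * s⁻¹) * s⁻¹ := by simp only [mul_assoc]
        _ = (s⁻¹ * s) * X' * (s * s⁻¹) := by rw [he]; simp only [mul_assoc]
        _ = X' := by rw [h, h']; simp
    rw [this]; exact hX'

end QDS
end
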